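/- Fix an integer d ≥ 4 and set β = d/2 − 2. Call an extreme point v of Qₙ an upper vertex if there exists u ∈ ℝ² with u₂ > 0 such that ⟨w, u⟩ ≤ ⟨v, u⟩ for all w ∈ Qₙ, and a lower vertex if the same holds for some u with u₂ < 0; let Uₙ and Lₙ be the numbers of upper and lower vertices of Qₙ, respectively. Then there exist a constant c > 0 and an integer N such that for all n ≥ N: |Cov(Uₙ, Lₙ)| ≤ c·(log n)², where Cov(Uₙ, Lₙ) = E[Uₙ·Lₙ] − E[Uₙ]·E[Lₙ]. -/

import Mathlib

open MeasureTheory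

/-- The `β`-distribution on the closed unit disk of `ℝ²`. -/
noncomputable def betaMeasure (β : ℝ) : Measure (EuclideanSpace ℝ (Fin 2)) :=
  volume.withDensity fun x =>
    ENNReal.ofReal (if ‖x‖ ≤ 1 then (β + 1) / Real.pi * (1 - ‖x‖ ^ 2) ^ β else 0)

instance (β : ℝ) : SigmaFinite (betaMeasure β) :=
  SigmaFinite.withDensity_ofReal _

/-- The joint law of `n` i.i.d. points with law `μ_β`, realized on `(ℝ²)ⁿ`. -/
noncomputable def betaPi (β : ℝ) (n : ℕ) :
    Measure (Fin n → EuclideanSpace ℝ (Fin 2)) :=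
  Measure.pi fun _ => betaMeasure β

/-- The number of upper vertices of `Qₙ`: extreme points admitting an outer normal
vector with positive second coordinate. -/
noncomputable def upCount {n : ℕ} (ω : Fin n → EuclideanSpace ℝ (Fin 2)) : ℝ :=
  Nat.card {v : EuclideanSpace ℝ (Fin 2) |
    v ∈ Set.extremePoints ℝ (convexHull ℝ (Set.range ω)) ∧
    ∃ u : EuclideanSpace ℝ (Fin 2), 0 < u 1 ∧
      ∀ w ∈ convexHull ℝ (Set.range ω), (inner ℝ w u : ℝ) ≤ inner ℝ v u}

/-- The number of lower vertices of `Qₙ`: extreme points admitting an outer normal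
vector with negative second coordinate. -/
noncomputable def lowCount {n : ℕ} (ω : Fin n → EuclideanSpace ℝ (Fin 2)) : ℝ :=
  Nat.card {v : EuclideanSpace ℝ (Fin 2) |
    v ∈ Set.extremePoints ℝ (convexHull ℝ (Set.range ω)) ∧
    ∃ u : EuclideanSpace ℝ (Fin 2), u 1 < 0 ∧
      ∀ w ∈ convexHull ℝ (Set.range ω), (inner ℝ w u : ℝ) ≤ inner ℝ v u}


abbrev E2 := EuclideanSpace ℝ (Fin 2)

/-- the density -/
noncomputable def bdens (β : ℝ) (r : ℝ) : ℝ :=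
  if r ≤ 1 then (β + 1) / Real.pi * (1 - r ^ 2) ^ β else 0

lemma betaMeasure_eq (β : ℝ) : betaMeasure β =
    (volume : Measure E2).withDensity fun x => ENNReal.ofReal (bdens β ‖x‖) := rfl

lemma bdens_measurable (β : ℝ) : Measurable (bdens β) := by
  unfold bdens
  refine Measurable.ite measurableSet_Iic ?_ measurable_const
  fun_prop

lemma bdens_nonneg {β : ℝ} (hβ : 0 ≤ β) {r : ℝ} (hr : 0 ≤ r) : 0 ≤ bdens β r := by
  unfold bdens
  split_ifs with h
  · have : 0 ≤ 1 - r ^ 2 := by nlinarith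
    have := Real.pi_pos
    positivity
  · exact le_rfl

lemma bdens_integral {β : ℝ} (hβ : 0 ≤ β) : ∫ x : E2, bdens β ‖x‖ = 1 := by
  rw [integral_fun_norm_addHaar]
  have h1 : (volume : Measure E2).real (Metric.ball 0 1) = Real.pi := by
    simp [Measure.real, Real.pi_pos.le]
  have h2 : ∫ y in Set.Ioi (0:ℝ), y ^ (Module.finrank ℝ E2 - 1) • bdens β y =
      ∫ y in (0:ℝ)..1, (β + 1) / Real.pi * (y * (1 - y ^ 2) ^ β) := by
    rw [intervalIntegral.integral_of_le zero_le_one]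
    have : Set.Ioc (0:ℝ) 1 = Set.Iic 1 ∩ Set.Ioi 0 := by ext; simp [and_comm]
    rw [this, ← Measure.restrict_restrict measurableSet_Iic, ← integral_indicator measurableSet_Iic]
    refine integral_congr_ae (Filter.Eventually.of_forall fun y => ?_)
    simp [Set.indicator, bdens]
    congr 1; ring
  have h3 : ∫ y in (0:ℝ)..1, (y * (1 - y ^ 2) ^ β) = 1 / (2 * (β + 1)) := by
    have hd : ∀ y ∈ Set.uIcc (0:ℝ) 1, HasDerivAt (fun y : ℝ => -(1 - y ^ 2) ^ (β + 1) / (2 * (β + 1)))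
        (y * (1 - y ^ 2) ^ β) y := by
      intro y _
      have h := (((hasDerivAt_const y (1:ℝ)).sub (hasDerivAt_pow 2 y)).rpow_const
        (p := β + 1) (Or.inr (by linarith))).neg.div_const (2 * (β + 1))
      refine HasDerivAt.congr_deriv (f' := _) h ?_
      have hb : β + 1 ≠ 0 := by positivity
      simp only [Pi.sub_apply, add_sub_cancel_right]
      field_simp
      norm_num
      ring
    rw [intervalIntegral.integral_eq_sub_of_hasDerivAt hd]
    · have : β + 1 ≠ 0 := by positivity
      simp [Real.zero_rpow this]
      field_simp
    · apply Continuous.intervalIntegrable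
      have : Continuous fun y : ℝ => (1 - y ^ 2) ^ β :=
        (by fun_prop : Continuous fun y : ℝ => 1 - y ^ 2).rpow_const (fun _ => Or.inr hβ)
      fun_prop
  rw [h2, h1, intervalIntegral.integral_const_mul, h3]
  have := Real.pi_pos
  simp
  field_simp

lemma beta_prob {β : ℝ} (hβ : 0 ≤ β) : IsProbabilityMeasure (betaMeasure β) := by
  constructor
  rw [betaMeasure_eq, withDensity_apply _ MeasurableSet.univ, Measure.restrict_univ,
    ← ofReal_integral_eq_lintegral_ofReal, bdens_integral hβ]
  · simp
  · by_contra h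
    have := integral_undef h
    rw [bdens_integral hβ] at this
    norm_num at this
  · exact Filter.Eventually.of_forall fun x => bdens_nonneg hβ (norm_nonneg x)

lemma beta_ac (β : ℝ) : betaMeasure β ≪ volume := withDensity_absolutelyContinuous _ _

lemma beta_noAtoms (β : ℝ) : NullSingletonClass (betaMeasure β) := by
  constructor
  intro x
  exact beta_ac β (measure_singleton x)

lemma beta_apply (β : ℝ) {s : Set E2} (hs : MeasurableSet s) :
    betaMeasure β s = ∫⁻ x in s, ENNReal.ofReal (bdens β ‖x‖) := by
  rw [betaMeasure_eq, withDensity_apply _ hs]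

lemma beta_disk (β : ℝ) : ∀ᵐ x ∂betaMeasure β, ‖x‖ ≤ 1 := by
  rw [ae_iff]
  have : MeasurableSet {x : E2 | ¬ ‖x‖ ≤ 1} := by
    apply MeasurableSet.compl
    exact measurableSet_le measurable_norm measurable_const
  rw [beta_apply β this]
  rw [setLIntegral_congr_fun this (g := fun _ => 0)]
  · simp
  · intro x hx
    simp only [Set.mem_ofPred_eq] at hx
    simp [bdens, hx]

lemma beta_map (β : ℝ) (f : E2 ≃ₗᵢ[ℝ] E2) : MeasurePreserving f (betaMeasure β) (betaMeasure β) := by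
  refine ⟨f.continuous.measurable, ?_⟩
  ext s hs
  rw [Measure.map_apply f.continuous.measurable hs, beta_apply β hs,
    beta_apply β (f.continuous.measurable hs),
    ← f.measurePreserving.setLIntegral_comp_preimage hs]
  · simp
  · exact ENNReal.measurable_ofReal.comp ((bdens_measurable β).comp measurable_norm)

/-- lower bound for the mass from lower density bound -/
lemma beta_lower (β : ℝ) {s : Set E2} (hs : MeasurableSet s) {a : ℝ}
    (h : ∀ x ∈ s, a ≤ bdens β ‖x‖) : ENNReal.ofReal a * volume s ≤ betaMeasure β s := by
  rw [beta_apply β hs, ← setLIntegral_const]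
  exact setLIntegral_mono' hs fun x hx => ENNReal.ofReal_le_ofReal (h x hx)

lemma beta_upper (β : ℝ) {s : Set E2} (hs : MeasurableSet s) {a : ℝ}
    (h : ∀ x ∈ s, bdens β ‖x‖ ≤ a) : betaMeasure β s ≤ ENNReal.ofReal a * volume s := by
  rw [beta_apply β hs, ← setLIntegral_const]
  exact setLIntegral_mono' hs fun x hx => ENNReal.ofReal_le_ofReal (h x hx)

lemma vol_prod : MeasurePreserving (fun x : E2 => ((x 0, x 1) : ℝ × ℝ)) volume volume :=
  (volume_preserving_finTwoArrow ℝ).comp (PiLp.volume_preserving_ofLp (Fin 2))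

lemma norm_sq_two (x : E2) : ‖x‖ ^ 2 = x 0 ^ 2 + x 1 ^ 2 := by
  rw [EuclideanSpace.norm_sq_eq]; simp

/-- fiber length -/
lemma fiber_len (A w : ℝ) (hw : 0 ≤ w) :
    volume {t : ℝ | 1 / 2 ≤ |t| ∧ A ≤ t ^ 2 ∧ t ^ 2 ≤ A + w} ≤ ENNReal.ofReal (2 * w) := by
  have h1 : volume {t : ℝ | 1 / 2 ≤ t ∧ A ≤ t ^ 2 ∧ t ^ 2 ≤ A + w} ≤ ENNReal.ofReal w := by
    refine (Real.volume_le_diam _).trans (Metric.ediam_le fun x hx y hy => ?_)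
    obtain ⟨a1, a2, a3⟩ := hx
    obtain ⟨b1, b2, b3⟩ := hy
    rw [edist_dist, Real.dist_eq]
    apply ENNReal.ofReal_le_ofReal
    rw [abs_le]
    constructor <;> nlinarith
  have h2 : volume {t : ℝ | 1 / 2 ≤ -t ∧ A ≤ t ^ 2 ∧ t ^ 2 ≤ A + w} ≤ ENNReal.ofReal w := by
    refine (Real.volume_le_diam _).trans (Metric.ediam_le fun x hx y hy => ?_)
    obtain ⟨a1, a2, a3⟩ := hx
    obtain ⟨b1, b2, b3⟩ := hy
    rw [edist_dist, Real.dist_eq]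
    apply ENNReal.ofReal_le_ofReal
    rw [abs_le]
    constructor <;> nlinarith
  have : {t : ℝ | 1 / 2 ≤ |t| ∧ A ≤ t ^ 2 ∧ t ^ 2 ≤ A + w} ⊆
      {t : ℝ | 1 / 2 ≤ t ∧ A ≤ t ^ 2 ∧ t ^ 2 ≤ A + w} ∪
      {t : ℝ | 1 / 2 ≤ -t ∧ A ≤ t ^ 2 ∧ t ^ 2 ≤ A + w} := by
    rintro t ⟨h, h'⟩
    rcases le_abs.1 h with h | h
    · exact Or.inl ⟨h, h'⟩
    · exact Or.inr ⟨h, h'⟩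
  refine (measure_mono this).trans ((measure_union_le _ _).trans ?_)
  rw [two_mul, ENNReal.ofReal_add hw hw]
  exact add_le_add h1 h2

/-- planar strip -/
lemma strip_prod (l a b : ℝ) (hl : 0 ≤ l) (hl1 : l ≤ 1) (hab : a ≤ b) :
    volume {z : ℝ × ℝ | (1 - l ^ 2) ^ 2 ≤ z.1 ^ 2 + z.2 ^ 2 ∧ z.1 ^ 2 + z.2 ^ 2 ≤ 1 ∧
      1 / 2 ≤ |z.2| ∧ a ≤ z.1 ∧ z.1 ≤ b} ≤ ENNReal.ofReal (4 * l ^ 2 * (b - a)) := by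
  have hm : MeasurableSet {z : ℝ × ℝ | (1 - l ^ 2) ^ 2 ≤ z.1 ^ 2 + z.2 ^ 2 ∧ z.1 ^ 2 + z.2 ^ 2 ≤ 1 ∧
      1 / 2 ≤ |z.2| ∧ a ≤ z.1 ∧ z.1 ≤ b} := by
    apply IsClosed.measurableSet
    simp only [Set.ofPred_and]
    refine IsClosed.inter (isClosed_le (by fun_prop) (by fun_prop)) (IsClosed.inter (isClosed_le (by fun_prop) (by fun_prop)) (IsClosed.inter (isClosed_le (by fun_prop) (by fun_prop)) (IsClosed.inter (isClosed_le (by fun_prop) (by fun_prop)) (isClosed_le (by fun_prop) (by fun_prop)))))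
  rw [Measure.volume_eq_prod, Measure.prod_apply hm]
  calc _ ≤ ∫⁻ x, (Set.Icc a b).indicator (fun _ => ENNReal.ofReal (4 * l ^ 2)) x := by
        refine lintegral_mono fun x => ?_
        by_cases hx : x ∈ Set.Icc a b
        · rw [Set.indicator_of_mem hx]
          have h := fiber_len ((1 - l ^ 2) ^ 2 - x ^ 2) (2 * l ^ 2) (by positivity)
          refine (measure_mono ?_).trans (h.trans (ENNReal.ofReal_le_ofReal (by linarith)))
          rintro t ⟨h1, h2, h3, -⟩
          simp only at h1 h2 h3
          refine ⟨h3, by linarith, ?_⟩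
          nlinarith [sq_nonneg (l ^ 2)]
        · rw [Set.indicator_of_notMem hx]
          have : (Prod.mk x ⁻¹' {z : ℝ × ℝ | (1 - l ^ 2) ^ 2 ≤ z.1 ^ 2 + z.2 ^ 2 ∧ z.1 ^ 2 + z.2 ^ 2 ≤ 1 ∧
            1 / 2 ≤ |z.2| ∧ a ≤ z.1 ∧ z.1 ≤ b}) = ∅ := by
            ext t
            simp only [Set.mem_preimage, Set.mem_ofPred_eq, Set.mem_empty_iff_false, iff_false]
            rintro ⟨-, -, -, h⟩
            exact hx h
          rw [this]; simp
    _ = _ := by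
        rw [lintegral_indicator measurableSet_Icc, setLIntegral_const, Real.volume_Icc,
          ← ENNReal.ofReal_mul (by positivity)]

lemma strip_vol (k k' : Fin 2) (hk : k ≠ k') (l a b : ℝ) (hl : 0 ≤ l) (hl1 : l ≤ 1) (hab : a ≤ b) :
    volume {x : E2 | 1 - l ^ 2 ≤ ‖x‖ ∧ ‖x‖ ≤ 1 ∧ 1 / 2 ≤ |x k'| ∧ a ≤ x k ∧ x k ≤ b} ≤
      ENNReal.ofReal (4 * l ^ 2 * (b - a)) := by
  have hmp : MeasurePreserving (fun x : E2 => ((x k, x k') : ℝ × ℝ)) volume volume := by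
    fin_cases k <;> fin_cases k' <;> simp at hk
    · exact vol_prod
    · exact (Measure.measurePreserving_swap (μ := (volume : Measure ℝ)) (ν := (volume : Measure ℝ))).comp vol_prod
  have hn : ∀ x : E2, ‖x‖ ^ 2 = x k ^ 2 + x k' ^ 2 := by
    intro x
    fin_cases k <;> fin_cases k' <;> simp at hk
    · exact norm_sq_two x
    · rw [norm_sq_two x, add_comm]; rfl
  refine le_trans ?_ (strip_prod l a b hl hl1 hab)
  rw [← hmp.measure_preimage]
  · apply measure_mono
    rintro x ⟨h1, h2, h3, h4⟩
    have := hn x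
    have h0 : 0 ≤ 1 - l ^ 2 := by nlinarith
    refine ⟨?_, ?_, h3, h4⟩
    · simp only; rw [← hn]; exact pow_le_pow_left₀ h0 h1 2
    · simp only; rw [← hn]; exact pow_le_one₀ (norm_nonneg x) h2
  · apply IsClosed.nullMeasurableSet
    simp only [Set.ofPred_and]
    refine IsClosed.inter (isClosed_le (by fun_prop) (by fun_prop)) (IsClosed.inter (isClosed_le (by fun_prop) (by fun_prop)) (IsClosed.inter (isClosed_le (by fun_prop) (by fun_prop)) (IsClosed.inter (isClosed_le (by fun_prop) (by fun_prop)) (isClosed_le (by fun_prop) (by fun_prop)))))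

lemma rpow_helper {d : ℕ} (hd : 4 ≤ d) {β : ℝ} (hβ : β = (d : ℝ) / 2 - 2) {l : ℝ} (hl : 0 ≤ l) :
    (l ^ 2) ^ β = l ^ (d - 4) := by
  rw [← Real.rpow_natCast l (d - 4), ← Real.rpow_natCast l 2, ← Real.rpow_mul hl]
  congr 1
  push_cast [Nat.cast_sub hd]
  rw [hβ]; ring

lemma beta_nonneg {d : ℕ} (hd : 4 ≤ d) {β : ℝ} (hβ : β = (d : ℝ) / 2 - 2) : 0 ≤ β := by
  have : (4 : ℝ) ≤ d := by exact_mod_cast hd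
  rw [hβ]; linarith

/-- corner region -/
def corner (l : ℝ) (s₀ s₁ : ℝ) (f : E2 ≃ₗᵢ[ℝ] E2) : Set E2 :=
  {y | 1 - l ^ 2 / 32 < s₀ * f y 0 ∧ l / 16 < s₁ * f y 1}

lemma corner_meas (l s₀ s₁ : ℝ) (f : E2 ≃ₗᵢ[ℝ] E2) : MeasurableSet (corner l s₀ s₁ f) := by
  have := f.continuous
  apply IsOpen.measurableSet
  unfold corner
  simp only [Set.ofPred_and]
  exact (isOpen_lt (by fun_prop) (by fun_prop)).inter (isOpen_lt (by fun_prop) (by fun_prop))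

lemma corner_one {d : ℕ} (hd : 4 ≤ d) {β : ℝ} (hβ : β = (d : ℝ) / 2 - 2) :
    ∃ c : ℝ, 0 < c ∧ ∀ l : ℝ, 0 ≤ l → l ≤ 1 →
      ENNReal.ofReal (c * l ^ (d - 1)) ≤
        betaMeasure β {y : E2 | 1 - l ^ 2 / 32 < y 0 ∧ l / 16 < y 1} := by
  have hb := beta_nonneg hd hβ
  have hpi := Real.pi_pos
  refine ⟨(β + 1) / Real.pi * (1 / 128) ^ β / 1024, by positivity, fun l hl hl1 => ?_⟩
  set s : Set E2 := (fun x : E2 => ((x 0, x 1) : ℝ × ℝ)) ⁻¹'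
    (Set.Ioo (1 - l ^ 2 / 32) (1 - l ^ 2 / 64) ×ˢ Set.Ioo (l / 16) (l / 8)) with hs
  have hsm : MeasurableSet s := vol_prod.measurable (measurableSet_Ioo.prod measurableSet_Ioo)
  have hsv : volume s = ENNReal.ofReal (l ^ 2 / 64 * (l / 16)) := by
    rw [hs, vol_prod.measure_preimage (measurableSet_Ioo.prod measurableSet_Ioo).nullMeasurableSet,
      Measure.volume_eq_prod, Measure.prod_prod, Real.volume_Ioo, Real.volume_Ioo,
      ENNReal.ofReal_mul (by positivity)]
    congr 2 <;> ring
  have hsub : s ⊆ {y : E2 | 1 - l ^ 2 / 32 < y 0 ∧ l / 16 < y 1} := by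
    rintro x ⟨h1, h2⟩
    exact ⟨h1.1, h2.1⟩
  refine le_trans ?_ (measure_mono hsub)
  have key : ∀ x ∈ s, (β + 1) / Real.pi * ((1 / 128) ^ β * l ^ (d - 4)) ≤ bdens β ‖x‖ := by
    rintro x ⟨⟨h1, h2⟩, ⟨h3, h4⟩⟩
    simp only at h1 h2 h3 h4
    have hn := norm_sq_two x
    have hl2 : l ^ 2 ≤ 1 := pow_le_one₀ hl hl1
    have h5 : x 0 ^ 2 ≤ (1 - l ^ 2 / 64) ^ 2 := pow_le_pow_left₀ (by linarith) h2.le 2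
    have h6 : x 1 ^ 2 ≤ (l / 8) ^ 2 := pow_le_pow_left₀ (by linarith) h4.le 2
    have h7 : 1 / 128 * l ^ 2 ≤ 1 - ‖x‖ ^ 2 := by nlinarith
    have h8 : ‖x‖ ≤ 1 := by
      by_contra! h
      nlinarith [sq_nonneg l]
    unfold bdens
    rw [if_pos h8, ← rpow_helper hd hβ hl, ← Real.mul_rpow (by norm_num) (by positivity)]
    gcongr
  refine le_trans (le_of_eq ?_) (beta_lower β hsm key)
  rw [hsv, ← ENNReal.ofReal_mul (by positivity)]
  congr 1
  obtain ⟨k, rfl⟩ : ∃ k, d = k + 4 := ⟨d - 4, by omega⟩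
  simp only [Nat.add_sub_cancel, show k + 4 - 1 = k + 3 from rfl]
  ring

noncomputable def sgnIso (s : Fin 2 → Bool) : E2 ≃ₗᵢ[ℝ] E2 :=
  LinearIsometryEquiv.piLpCongrRight 2
    (fun i => if s i then LinearIsometryEquiv.refl ℝ ℝ else LinearIsometryEquiv.neg ℝ)

lemma sgnIso_apply (s : Fin 2 → Bool) (x : E2) (i : Fin 2) :
    sgnIso s x i = (if s i then 1 else -1) * x i := by
  unfold sgnIso
  simp only [LinearIsometryEquiv.piLpCongrRight_apply]
  split_ifs with h <;> simp [h]

lemma corner_mass {d : ℕ} (hd : 4 ≤ d) {β : ℝ} (hβ : β = (d : ℝ) / 2 - 2) :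
    ∃ c : ℝ, 0 < c ∧ ∀ l : ℝ, 0 ≤ l → l ≤ 1 → ∀ s : Fin 2 → Bool, ∀ f : E2 ≃ₗᵢ[ℝ] E2,
      ENNReal.ofReal (c * l ^ (d - 1)) ≤ betaMeasure β (corner l (if s 0 then 1 else -1)
        (if s 1 then 1 else -1) f) := by
  obtain ⟨c, hc, h⟩ := corner_one hd hβ
  refine ⟨c, hc, fun l hl hl1 s f => (h l hl hl1).trans (le_of_eq ?_)⟩
  rw [← (beta_map β (f.trans (sgnIso s))).measure_preimage_equiv (f := (f.trans (sgnIso s)).toMeasurableEquiv)]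
  congr 1
  ext y
  simp [corner, sgnIso_apply]

lemma strip_mass {d : ℕ} (hd : 4 ≤ d) {β : ℝ} (hβ : β = (d : ℝ) / 2 - 2) :
    ∃ K : ℝ, 0 < K ∧ ∀ l : ℝ, 0 ≤ l → l ≤ 1 → ∀ k k' : Fin 2, k ≠ k' → ∀ a b : ℝ, a ≤ b →
      betaMeasure β {x : E2 | 1 - l ^ 2 ≤ ‖x‖ ∧ ‖x‖ ≤ 1 ∧ 1 / 2 ≤ |x k'| ∧ a ≤ x k ∧ x k ≤ b} ≤
        ENNReal.ofReal (K * l ^ (d - 2) * (b - a)) := by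
  have hb := beta_nonneg hd hβ
  have hpi := Real.pi_pos
  refine ⟨(β + 1) / Real.pi * 2 ^ β * 4, by positivity, fun l hl hl1 k k' hk a b hab => ?_⟩
  have hm : MeasurableSet {x : E2 | 1 - l ^ 2 ≤ ‖x‖ ∧ ‖x‖ ≤ 1 ∧ 1 / 2 ≤ |x k'| ∧ a ≤ x k ∧ x k ≤ b} := by
    apply IsClosed.measurableSet
    simp only [Set.ofPred_and]
    refine IsClosed.inter (isClosed_le (by fun_prop) (by fun_prop)) (IsClosed.inter (isClosed_le (by fun_prop) (by fun_prop)) (IsClosed.inter (isClosed_le (by fun_prop) (by fun_prop)) (IsClosed.inter (isClosed_le (by fun_prop) (by fun_prop)) (isClosed_le (by fun_prop) (by fun_prop)))))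
  have key : ∀ x ∈ {x : E2 | 1 - l ^ 2 ≤ ‖x‖ ∧ ‖x‖ ≤ 1 ∧ 1 / 2 ≤ |x k'| ∧ a ≤ x k ∧ x k ≤ b},
      bdens β ‖x‖ ≤ (β + 1) / Real.pi * (2 ^ β * l ^ (d - 4)) := by
    rintro x ⟨h1, h2, -⟩
    unfold bdens
    rw [if_pos h2, ← rpow_helper hd hβ hl, ← Real.mul_rpow (by norm_num) (by positivity)]
    have h3 : 0 ≤ 1 - ‖x‖ ^ 2 := by nlinarith [norm_nonneg x]
    have h4 : 1 - ‖x‖ ^ 2 ≤ 2 * l ^ 2 := by nlinarith [norm_nonneg x]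
    gcongr
  refine (beta_upper β hm key).trans ?_
  refine (mul_le_mul_right (strip_vol k k' hk l a b hl hl1 hab) _).trans (le_of_eq ?_)
  rw [← ENNReal.ofReal_mul (by positivity)]
  congr 1
  obtain ⟨m, rfl⟩ : ∃ m, d = m + 4 := ⟨d - 4, by omega⟩
  simp only [Nat.add_sub_cancel, show m + 4 - 2 = m + 2 from rfl]
  ring

lemma two_coords {x : E2} (h : 3 / 4 ≤ ‖x‖) : 1 / 2 ≤ |x 0| ∨ 1 / 2 ≤ |x 1| := by
  by_contra! hh
  have hn := norm_sq_two x
  have h0 : x 0 ^ 2 ≤ (1 / 2) ^ 2 := sq_le_sq.2 (by rw [abs_of_pos (by norm_num : (0:ℝ) < 1/2)]; exact hh.1.le)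
  have h1 : x 1 ^ 2 ≤ (1 / 2) ^ 2 := sq_le_sq.2 (by rw [abs_of_pos (by norm_num : (0:ℝ) < 1/2)]; exact hh.2.le)
  nlinarith

lemma abs_coord_le (x : E2) (k : Fin 2) : |x k| ≤ ‖x‖ := by
  simpa using PiLp.norm_apply_le x k

lemma trivial_mass {β : ℝ} (hβ : 0 ≤ β) (k : ℕ) {K l : ℝ} (hK : 8 ^ k ≤ K) (hl : 1 / 8 < l) (s : Set E2) :
    betaMeasure β s ≤ ENNReal.ofReal (K * l ^ k) := by
  have := beta_prob hβ
  have hK0 : 0 ≤ K := le_trans (by positivity) hK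
  refine prob_le_one.trans ?_
  rw [← ENNReal.ofReal_one]
  apply ENNReal.ofReal_le_ofReal
  calc (1:ℝ) = 8 ^ k * (1 / 8) ^ k := by rw [← mul_pow]; norm_num
    _ ≤ K * l ^ k := by gcongr

lemma ub_one {d : ℕ} (hd : 4 ≤ d) {β : ℝ} (hβ : β = (d : ℝ) / 2 - 2) :
    ∃ K : ℝ, 0 < K ∧ ∀ l : ℝ, 0 ≤ l → ∀ x : E2,
      betaMeasure β {y : E2 | 1 - l ^ 2 ≤ ‖y‖ ∧ ‖x - y‖ ≤ 3 * l} ≤ ENNReal.ofReal (K * l ^ (d - 1)) := by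
  obtain ⟨K, hK, h⟩ := strip_mass hd hβ
  refine ⟨12 * K + 8 ^ (d - 1), by positivity, fun l hl x => ?_⟩
  rcases lt_or_ge (1 / 8) l with hl8 | hl8
  · exact trivial_mass (beta_nonneg hd hβ) _ (by linarith) hl8 _
  have h0 := h l hl (by linarith) 0 1 (by decide) (x 0 - 3 * l) (x 0 + 3 * l) (by linarith)
  have h1 := h l hl (by linarith) 1 0 (by decide) (x 1 - 3 * l) (x 1 + 3 * l) (by linarith)
  have hle : ∀ᵐ y ∂betaMeasure β, y ∈ {y : E2 | 1 - l ^ 2 ≤ ‖y‖ ∧ ‖x - y‖ ≤ 3 * l} →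
      y ∈ {y : E2 | 1 - l ^ 2 ≤ ‖y‖ ∧ ‖y‖ ≤ 1 ∧ 1 / 2 ≤ |y 1| ∧ x 0 - 3 * l ≤ y 0 ∧ y 0 ≤ x 0 + 3 * l} ∪
        {y : E2 | 1 - l ^ 2 ≤ ‖y‖ ∧ ‖y‖ ≤ 1 ∧ 1 / 2 ≤ |y 0| ∧ x 1 - 3 * l ≤ y 1 ∧ y 1 ≤ x 1 + 3 * l} := by
    filter_upwards [beta_disk β] with y hy
    rintro ⟨a1, a2⟩
    have b0 := (abs_coord_le (x - y) 0).trans a2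
    have b1 := (abs_coord_le (x - y) 1).trans a2
    simp only [PiLp.sub_apply, abs_le] at b0 b1
    rcases two_coords (x := y) (by nlinarith) with hh | hh
    · right; exact ⟨a1, hy, hh, by linarith, by linarith⟩
    · left; exact ⟨a1, hy, hh, by linarith, by linarith⟩
  refine (measure_mono_ae hle).trans ((measure_union_le _ _).trans ((add_le_add h0 h1).trans ?_))
  rw [← ENNReal.ofReal_add (by ring_nf; positivity) (by ring_nf; positivity)]
  apply ENNReal.ofReal_le_ofReal
  obtain ⟨m, rfl⟩ : ∃ m, d = m + 2 := ⟨d - 2, by omega⟩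
  simp only [Nat.add_sub_cancel, show m + 2 - 1 = m + 1 from rfl]
  have : 0 ≤ (8:ℝ) ^ (m + 1) * l ^ (m + 1) := by positivity
  nlinarith [pow_succ l m]

lemma ub_two {d : ℕ} (hd : 4 ≤ d) {β : ℝ} (hβ : β = (d : ℝ) / 2 - 2) :
    ∃ K : ℝ, 0 < K ∧ ∀ l : ℝ, 0 ≤ l →
      betaMeasure β {y : E2 | 1 - l ^ 2 ≤ ‖y‖ ∧ |y 1| ≤ 2 * l} ≤ ENNReal.ofReal (K * l ^ (d - 1)) := by
  obtain ⟨K, hK, h⟩ := strip_mass hd hβ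
  refine ⟨4 * K + 8 ^ (d - 1), by positivity, fun l hl => ?_⟩
  rcases lt_or_ge (1 / 8) l with hl8 | hl8
  · exact trivial_mass (beta_nonneg hd hβ) _ (by linarith) hl8 _
  have h1 := h l hl (by linarith) 1 0 (by decide) (- 2 * l) (2 * l) (by linarith)
  have hle : ∀ᵐ y ∂betaMeasure β, y ∈ {y : E2 | 1 - l ^ 2 ≤ ‖y‖ ∧ |y 1| ≤ 2 * l} →
      y ∈ {y : E2 | 1 - l ^ 2 ≤ ‖y‖ ∧ ‖y‖ ≤ 1 ∧ 1 / 2 ≤ |y 0| ∧ - 2 * l ≤ y 1 ∧ y 1 ≤ 2 * l} := by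
    filter_upwards [beta_disk β] with y hy
    rintro ⟨a1, a2⟩
    have b := abs_le.1 a2
    refine ⟨a1, hy, ?_, by linarith, by linarith⟩
    rcases two_coords (x := y) (by nlinarith) with hh | hh
    · exact hh
    · linarith
  refine (measure_mono_ae hle).trans (h1.trans ?_)
  apply ENNReal.ofReal_le_ofReal
  obtain ⟨m, rfl⟩ : ∃ m, d = m + 2 := ⟨d - 2, by omega⟩
  simp only [Nat.add_sub_cancel, show m + 2 - 1 = m + 1 from rfl]
  have : 0 ≤ (8:ℝ) ^ (m + 1) * l ^ (m + 1) := by positivity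
  nlinarith [pow_succ l m]

lemma ub_zero {d : ℕ} (hd : 4 ≤ d) {β : ℝ} (hβ : β = (d : ℝ) / 2 - 2) :
    ∃ K : ℝ, 0 < K ∧ ∀ l : ℝ, 0 ≤ l →
      betaMeasure β {y : E2 | 1 - l ^ 2 ≤ ‖y‖} ≤ ENNReal.ofReal (K * l ^ (d - 2)) := by
  obtain ⟨K, hK, h⟩ := strip_mass hd hβ
  refine ⟨4 * K + 8 ^ (d - 2), by positivity, fun l hl => ?_⟩
  rcases lt_or_ge (1 / 8) l with hl8 | hl8
  · exact trivial_mass (beta_nonneg hd hβ) _ (by linarith) hl8 _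
  have h0 := h l hl (by linarith) 0 1 (by decide) (-1) 1 (by linarith)
  have h1 := h l hl (by linarith) 1 0 (by decide) (-1) 1 (by linarith)
  have hle : ∀ᵐ y ∂betaMeasure β, y ∈ {y : E2 | 1 - l ^ 2 ≤ ‖y‖} →
      y ∈ {y : E2 | 1 - l ^ 2 ≤ ‖y‖ ∧ ‖y‖ ≤ 1 ∧ 1 / 2 ≤ |y 1| ∧ -1 ≤ y 0 ∧ y 0 ≤ 1} ∪
        {y : E2 | 1 - l ^ 2 ≤ ‖y‖ ∧ ‖y‖ ≤ 1 ∧ 1 / 2 ≤ |y 0| ∧ -1 ≤ y 1 ∧ y 1 ≤ 1} := by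
    filter_upwards [beta_disk β] with y hy
    intro a1
    have a1 : 1 - l ^ 2 ≤ ‖y‖ := a1
    have b0 := (abs_coord_le y 0).trans hy
    have b1 := (abs_coord_le y 1).trans hy
    rw [abs_le] at b0 b1
    rcases two_coords (x := y) (by nlinarith) with hh | hh
    · right; exact ⟨a1, hy, hh, by linarith, by linarith⟩
    · left; exact ⟨a1, hy, hh, by linarith, by linarith⟩
  refine (measure_mono_ae hle).trans ((measure_union_le _ _).trans ((add_le_add h0 h1).trans ?_))
  rw [← ENNReal.ofReal_add (by ring_nf; positivity) (by ring_nf; positivity)]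
  apply ENNReal.ofReal_le_ofReal
  have : 0 ≤ (8:ℝ) ^ (d - 2) * l ^ (d - 2) := by positivity
  nlinarith

/-- layer-cake type bound -/
lemma layer {α : Type*} [MeasurableSpace α] (K c θ : ℝ) (hK : 0 ≤ K) (hc : 0 < c)
    (hθ : 0 ≤ θ) (hθ1 : θ ≤ 1) :
    ∃ C : ℝ, 0 ≤ C ∧ ∀ (μ : Measure α) (ψ : α → ℝ), Measurable ψ → (∀ x, 0 ≤ ψ x) →
      (∀ a : ℝ, 0 < a → μ {x | ψ x ≤ a} ≤ ENNReal.ofReal (K * a ^ θ)) →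
      ∀ N : ℝ, 0 < N →
      ∫⁻ x, ENNReal.ofReal (Real.exp (-(c * N * ψ x))) ∂μ ≤ ENNReal.ofReal (C * N ^ (-θ)) := by
  have hsum : Summable (fun k : ℕ => Real.exp (-(c * k)) * ((k : ℝ) + 1)) := by
    have h1 := Real.summable_pow_mul_exp_neg_nat_mul 1 hc
    have h0 := Real.summable_pow_mul_exp_neg_nat_mul 0 hc
    refine (h1.add h0).congr fun k => ?_
    simp only [pow_one, pow_zero]
    rw [neg_mul]
    ring
  refine ⟨K * ∑' k : ℕ, Real.exp (-(c * k)) * ((k : ℝ) + 1),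
    mul_nonneg hK (tsum_nonneg fun k => by positivity), ?_⟩
  intro μ ψ hψ hψ0 hμ N hN
  have hpt : ∀ x, ENNReal.ofReal (Real.exp (-(c * N * ψ x))) ≤
      ∑' k : ℕ, ({x | ψ x ≤ ((k : ℝ) + 1) / N}).indicator
        (fun _ => ENNReal.ofReal (Real.exp (-(c * k)))) x := by
    intro x
    refine le_trans ?_ (ENNReal.le_tsum ⌊N * ψ x⌋₊)
    have h0 : 0 ≤ N * ψ x := mul_nonneg hN.le (hψ0 x)
    rw [Set.indicator_of_mem]
    · apply ENNReal.ofReal_le_ofReal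
      apply Real.exp_le_exp.2
      have := Nat.floor_le h0
      nlinarith
    · show ψ x ≤ _
      rw [le_div_iff₀ hN]
      have := (Nat.lt_floor_add_one (N * ψ x)).le
      linarith
  calc _ ≤ ∫⁻ x, ∑' k : ℕ, ({x | ψ x ≤ ((k : ℝ) + 1) / N}).indicator
        (fun _ => ENNReal.ofReal (Real.exp (-(c * k)))) x ∂μ := lintegral_mono hpt
    _ = ∑' k : ℕ, ENNReal.ofReal (Real.exp (-(c * k))) * μ {x | ψ x ≤ ((k : ℝ) + 1) / N} := by
        rw [lintegral_tsum]
        · congr 1; ext k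
          rw [lintegral_indicator_const (measurableSet_le hψ measurable_const)]
        · intro k
          exact (measurable_const.indicator (measurableSet_le hψ measurable_const)).aemeasurable
    _ ≤ ∑' k : ℕ, ENNReal.ofReal (K * N ^ (-θ) * (Real.exp (-(c * k)) * ((k : ℝ) + 1))) := by
        refine ENNReal.tsum_le_tsum fun k => ?_
        refine (mul_le_mul_right (hμ _ (by positivity)) _).trans ?_
        rw [← ENNReal.ofReal_mul (by positivity)]
        apply ENNReal.ofReal_le_ofReal
        have h1 : (((k : ℝ) + 1) / N) ^ θ ≤ ((k : ℝ) + 1) * N ^ (-θ) := by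
          rw [Real.div_rpow (by positivity) hN.le, Real.rpow_neg hN.le, div_eq_mul_inv]
          gcongr
          calc ((k : ℝ) + 1) ^ θ ≤ ((k : ℝ) + 1) ^ (1:ℝ) :=
                Real.rpow_le_rpow_of_exponent_le (by simp) hθ1
            _ = _ := Real.rpow_one _
        calc _ ≤ Real.exp (-(c * k)) * (K * (((k : ℝ) + 1) * N ^ (-θ))) := by gcongr
          _ = _ := by ring
    _ = _ := by
        rw [← ENNReal.ofReal_tsum_of_nonneg (fun k => by positivity) (hsum.mul_left _),
          tsum_mul_left]
        congr 1; ring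

/-- alignment of x with the first axis -/
lemma exists_frame (x : E2) : ∃ f : E2 ≃ₗᵢ[ℝ] E2, f x 0 = ‖x‖ ∧ f x 1 = 0 := by
  have hn : ‖x‖ = ‖(EuclideanSpace.single 0 ‖x‖ : E2)‖ := by simp
  refine ⟨(ℝ ∙ (x - EuclideanSpace.single 0 ‖x‖))ᗮ.reflection, ?_⟩
  rw [Submodule.reflection_sub hn]
  simp

lemma inner_two (x y : E2) : inner ℝ x y = x 0 * y 0 + x 1 * y 1 := by
  simp [PiLp.inner_apply, mul_comm]

lemma corner_geom {x u : E2} (hx : ‖x‖ ≤ 1) (hu : ‖u‖ = 1) {s l : ℝ} (hs : s ≤ inner ℝ x u)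
    (hl : 0 ≤ l) (hl1 : l ≤ 1) (hls : l ^ 2 ≤ 1 - s) (f : E2 ≃ₗᵢ[ℝ] E2)
    (h0 : f x 0 = ‖x‖) (h1 : f x 1 = 0) :
    ∃ σ : Fin 2 → Bool, ∀ w ∈ corner l (if σ 0 then 1 else -1) (if σ 1 then 1 else -1) f,
      s < inner ℝ w u := by
  have hin : ∀ w : E2, inner ℝ w u = f w 0 * f u 0 + f w 1 * f u 1 := by
    intro w
    rw [← inner_two, f.inner_map_map]
  rw [hin, h0, h1] at hs
  have hab : f u 0 ^ 2 + f u 1 ^ 2 = 1 := by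
    rw [← norm_sq_two, f.norm_map, hu]; norm_num
  set a := f u 0
  set b := f u 1
  have hl2 : l ^ 2 ≤ 1 := pow_le_one₀ hl hl1
  -- main inequality
  have main : ∀ p q B : ℝ, 0 ≤ B → a ^ 2 + B ^ 2 = 1 → 0 ≤ a → 1 - l ^ 2 / 32 < p → l / 16 < q →
      s < p * a + q * B := by
    intro p q B hB haB ha hp hq
    have hxn := norm_nonneg x
    have hsa : s ≤ a := by nlinarith
    have strict : (1 - l ^ 2 / 32) * a + l / 16 * B < p * a + q * B := by
      rcases ha.eq_or_lt with h | h
      · have : 0 < B := by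
          rcases hB.eq_or_lt with h' | h'
          · rw [← h, ← h'] at haB; norm_num at haB
          · exact h'
        nlinarith
      · nlinarith
    refine lt_of_le_of_lt ?_ strict
    have ha1 : a ≤ 1 := by nlinarith [sq_nonneg B]
    rcases le_or_gt (l / 2) B with h | h
    · nlinarith [mul_le_mul_of_nonneg_left h hl, mul_le_mul_of_nonneg_left ha1 (sq_nonneg l)]
    · have : 1 - l ^ 2 / 4 ≤ a := by nlinarith
      nlinarith [mul_le_mul_of_nonneg_left ha1 (sq_nonneg l)]
  have main2 : ∀ p q B : ℝ, 0 ≤ B → a < 0 → 1 - l ^ 2 / 32 < -p → l / 16 < q →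
      s < p * a + q * B := by
    intro p q B hB ha hp hq
    have : s ≤ 0 := by nlinarith [norm_nonneg x]
    have : 0 < p * a := by nlinarith
    have : 0 ≤ q * B := mul_nonneg (by linarith) hB
    linarith
  rcases le_or_gt 0 a with ha | ha <;> rcases le_or_gt 0 b with hb | hb
  · refine ⟨![true, true], ?_⟩
    rintro w ⟨h2, h3⟩
    simp at h2 h3
    rw [hin]
    exact main _ _ b hb hab ha h2 h3
  · refine ⟨![true, false], ?_⟩
    rintro w ⟨h2, h3⟩
    simp at h2 h3
    rw [hin]
    have := main _ _ (-b) (by linarith) (by linarith) ha h2 h3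
    linarith
  · refine ⟨![false, true], ?_⟩
    rintro w ⟨h2, h3⟩
    simp at h2 h3
    rw [hin]
    exact main2 _ _ b hb ha h2 h3
  · refine ⟨![false, false], ?_⟩
    rintro w ⟨h2, h3⟩
    simp at h2 h3
    rw [hin]
    have := main2 _ _ (-b) (by linarith) ha h2 h3
    linarith

/-- `x` and `y` lie in a common (closed) half plane, with normal in the `σ` half, not containing
the points of `V` in its interior -/
def capped (σ : ℝ) (x y : E2) {N : ℕ} (V : Fin N → E2) : Prop :=
  ∃ u : E2, ∃ s : ℝ, 0 < σ * u 1 ∧ ‖u‖ = 1 ∧ s ≤ inner ℝ x u ∧ s ≤ inner ℝ y u ∧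
    ∀ l, inner ℝ (V l) u ≤ s

/-- scale of the point x -/
noncomputable def scA (σ : ℝ) (x : E2) : ℝ := max (1 - ‖x‖) ((max 0 (-(σ * x 1))) ^ 2 / 2)
noncomputable def scB (x y : E2) : ℝ := max (1 - ‖y‖) (‖x - y‖ ^ 2 / 8)

lemma dist_cap {y u : E2} (hy : ‖y‖ ≤ 1) (hu : ‖u‖ = 1) {s : ℝ} (hs : s ≤ inner ℝ y u) :
    ‖y - u‖ ^ 2 ≤ 2 * (1 - s) := by
  rw [norm_sub_sq_real, hu]
  nlinarith [norm_nonneg y]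

lemma scA_le {σ : ℝ} (hσ : |σ| = 1) {x u : E2} (hx : ‖x‖ ≤ 1) (hu : ‖u‖ = 1) {s : ℝ}
    (hs : s ≤ inner ℝ x u) (hσu : 0 < σ * u 1) : scA σ x ≤ 1 - s := by
  have h1 : (inner ℝ x u : ℝ) ≤ ‖x‖ := by
    have := real_inner_le_norm x u
    rwa [hu, mul_one] at this
  apply max_le (by linarith)
  have h2 := dist_cap hx hu hs
  have h3 : |σ * (x - u) 1| ≤ ‖x - u‖ := by
    rw [abs_mul, hσ, one_mul]; exact abs_coord_le _ _
  have h4 := (abs_le.1 h3).1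
  simp only [PiLp.sub_apply] at h4
  have h5 : max 0 (-(σ * x 1)) ≤ ‖x - u‖ := by
    apply max_le (norm_nonneg _)
    nlinarith
  have h6 := pow_le_pow_left₀ (le_max_left 0 (-(σ * x 1))) h5 2
  linarith

lemma scB_le {x y u : E2} (hx : ‖x‖ ≤ 1) (hy : ‖y‖ ≤ 1) (hu : ‖u‖ = 1) {s : ℝ}
    (hs : s ≤ inner ℝ x u) (hs' : s ≤ inner ℝ y u) : scB x y ≤ 1 - s := by
  have h1 : (inner ℝ y u : ℝ) ≤ ‖y‖ := by
    have := real_inner_le_norm y u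
    rwa [hu, mul_one] at this
  apply max_le (by linarith)
  have h2 := dist_cap hx hu hs
  have h3 := dist_cap hy hu hs'
  have h4 : ‖x - y‖ ≤ ‖x - u‖ + ‖y - u‖ := by
    have := norm_sub_le (x - u) (y - u)
    simpa using this
  have := pow_le_pow_left₀ (norm_nonneg _) h4 2
  nlinarith [sq_nonneg (‖x - u‖ - ‖y - u‖)]

lemma scA_mem {σ : ℝ} (hσ : |σ| = 1) {x : E2} (hx : ‖x‖ ≤ 1) : 0 ≤ scA σ x ∧ scA σ x ≤ 1 := by
  refine ⟨le_max_of_le_left (by linarith), max_le (by linarith [norm_nonneg x]) ?_⟩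
  have : max 0 (-(σ * x 1)) ≤ 1 := by
    apply max_le zero_le_one
    refine (neg_le_abs _).trans ?_
    rw [abs_mul, hσ, one_mul]
    exact (abs_coord_le _ _).trans hx
  have := pow_le_pow_left₀ (le_max_left 0 (-(σ * x 1))) this 2
  linarith

lemma scB_mem {x y : E2} (hx : ‖x‖ ≤ 1) (hy : ‖y‖ ≤ 1) : 0 ≤ scB x y ∧ scB x y ≤ 1 := by
  refine ⟨le_max_of_le_left (by linarith), max_le (by linarith [norm_nonneg y]) ?_⟩
  have h : ‖x - y‖ ≤ 2 := (norm_sub_le x y).trans (by linarith)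
  have := pow_le_pow_left₀ (norm_nonneg _) h 2
  linarith

noncomputable def psA (d : ℕ) (σ : ℝ) (x : E2) : ℝ := √(scA σ x) ^ (d - 1)
noncomputable def psB (d : ℕ) (x y : E2) : ℝ := √(scB x y) ^ (d - 1)

/-- the empty cap probability -/
lemma cap_prob {d : ℕ} (hd : 4 ≤ d) {β : ℝ} (hβ : β = (d : ℝ) / 2 - 2) :
    ∃ c : ℝ, 0 < c ∧ ∀ (N : ℕ) (σ : ℝ), |σ| = 1 → ∀ x y : E2, ‖x‖ ≤ 1 → ‖y‖ ≤ 1 →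
      ∀ a : ℝ, 0 ≤ a → a ≤ 1 → (a ≤ scA σ x ∨ a ≤ scB x y) →
      betaPi β N {V | capped σ x y V} ≤ 4 * ENNReal.ofReal (Real.exp (-(c * N * √a ^ (d - 1)))) := by
  obtain ⟨c, hc, h⟩ := corner_mass hd hβ
  have := beta_prob (beta_nonneg hd hβ)
  refine ⟨c, hc, fun N σ hσ x y hx hy a ha ha1 hax => ?_⟩
  obtain ⟨f, hf0, hf1⟩ := exists_frame x
  have hl0 := Real.sqrt_nonneg a
  have hl1 : √a ≤ 1 := by simpa using ha1
  have hsq := Real.sq_sqrt ha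
  have hsub : {V : Fin N → E2 | capped σ x y V} ⊆ ⋃ s : Fin 2 → Bool,
      Set.pi Set.univ fun _ : Fin N =>
        (corner (√a) (if s 0 then 1 else -1) (if s 1 then 1 else -1) f)ᶜ := by
    rintro V ⟨u, s, hu1, hu, hxs, hys, hV⟩
    have has : √a ^ 2 ≤ 1 - s := by
      rw [hsq]
      rcases hax with h | h
      · exact h.trans (scA_le hσ hx hu hxs hu1)
      · exact h.trans (scB_le hx hy hu hxs hys)
    obtain ⟨τ, hτ⟩ := corner_geom hx hu hxs hl0 hl1 has f hf0 hf1
    refine Set.mem_iUnion.2 ⟨τ, fun l _ hl => ?_⟩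
    exact absurd (hτ _ hl) (not_lt.2 (hV l))
  refine (measure_mono hsub).trans ((measure_iUnion_fintype_le _ _).trans ?_)
  have hone : ∀ s : Fin 2 → Bool, betaPi β N (Set.pi Set.univ fun _ : Fin N =>
        (corner (√a) (if s 0 then 1 else -1) (if s 1 then 1 else -1) f)ᶜ) ≤
        ENNReal.ofReal (Real.exp (-(c * N * √a ^ (d - 1)))) := by
    intro s
    unfold betaPi
    rw [Measure.pi_pi, Finset.prod_const, Finset.card_univ, Fintype.card_fin]
    have h1 : betaMeasure β (corner (√a) (if s 0 then 1 else -1) (if s 1 then 1 else -1) f)ᶜ ≤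
        ENNReal.ofReal (Real.exp (-(c * √a ^ (d - 1)))) := by
      rw [prob_compl_eq_one_sub (corner_meas _ _ _ _)]
      refine (tsub_le_tsub_left (h _ hl0 hl1 s f) _).trans ?_
      rw [← ENNReal.ofReal_one, ← ENNReal.ofReal_sub _ (by positivity)]
      apply ENNReal.ofReal_le_ofReal
      have := Real.add_one_le_exp (-(c * √a ^ (d - 1)))
      linarith
    refine (pow_le_pow_left' h1 N).trans (le_of_eq ?_)
    rw [← ENNReal.ofReal_pow (Real.exp_pos _).le, ← Real.exp_nat_mul]
    congr 2; ring
  refine (Finset.sum_le_sum fun s _ => hone s).trans (le_of_eq ?_)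
  rw [Finset.sum_const, Finset.card_univ]
  simp

def ind (σ : ℝ) {n : ℕ} (ω : Fin n → E2) (j : Fin n) : Prop :=
  ∃ u : E2, 0 < σ * u 1 ∧ ∀ k, k ≠ j → (inner ℝ (ω k) u : ℝ) < inner ℝ (ω j) u

noncomputable def cnt (σ : ℝ) {n : ℕ} (ω : Fin n → E2) : ℝ :=
  ∑ j, ({ω : Fin n → E2 | ind σ ω j}).indicator (fun _ => (1 : ℝ)) ω

lemma ind_open (σ : ℝ) {n : ℕ} (j : Fin n) : IsOpen {ω : Fin n → E2 | ind σ ω j} := by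
  have : {ω : Fin n → E2 | ind σ ω j} = ⋃ u : E2, ⋃ _ : 0 < σ * u 1, ⋂ k : Fin n, ⋂ _ : k ≠ j,
      {ω : Fin n → E2 | (inner ℝ (ω k) u : ℝ) < inner ℝ (ω j) u} := by
    ext ω; simp [ind]
  rw [this]
  refine isOpen_iUnion fun u => isOpen_iUnion fun _ => isOpen_iInter_of_finite fun k =>
    isOpen_iInter_of_finite fun _ => isOpen_lt (by fun_prop) (by fun_prop)

lemma ind_meas (σ : ℝ) {n : ℕ} (j : Fin n) : MeasurableSet {ω : Fin n → E2 | ind σ ω j} :=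
  (ind_open σ j).measurableSet

lemma cnt_meas (σ : ℝ) (n : ℕ) : Measurable (cnt σ : (Fin n → E2) → ℝ) := by
  unfold cnt
  exact Finset.measurable_sum _ fun j _ => measurable_const.indicator (ind_meas σ j)

lemma cnt_nonneg (σ : ℝ) {n : ℕ} (ω : Fin n → E2) : 0 ≤ cnt σ ω :=
  Finset.sum_nonneg fun j _ => Set.indicator_nonneg (fun _ _ => zero_le_one) _

lemma cnt_le (σ : ℝ) {n : ℕ} (ω : Fin n → E2) : cnt σ ω ≤ n := by
  unfold cnt
  calc _ ≤ ∑ _j : Fin n, (1:ℝ) := Finset.sum_le_sum fun j _ => Set.indicator_le_self' (fun _ _ => zero_le_one) _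
    _ = n := by simp

lemma cnt_eq_ncard (σ : ℝ) {n : ℕ} (ω : Fin n → E2) : cnt σ ω = Set.ncard {j | ind σ ω j} := by
  classical
  unfold cnt
  rw [Set.ncard_eq_toFinset_card', Set.toFinset_ofPred, Finset.card_filter]
  push_cast
  refine Finset.sum_congr rfl fun j _ => ?_
  simp [Set.indicator]

lemma vertex_set (σ : ℝ) {n : ℕ} (ω : Fin n → E2) (hω : Function.Injective ω) :
    {v : E2 | v ∈ Set.extremePoints ℝ (convexHull ℝ (Set.range ω)) ∧
      ∃ u : E2, 0 < σ * u 1 ∧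
        ∀ w ∈ convexHull ℝ (Set.range ω), (inner ℝ w u : ℝ) ≤ inner ℝ v u} =
    ω '' {j | ind σ ω j} := by
  have hconv := convex_convexHull ℝ (Set.range ω)
  ext v
  constructor
  · rintro ⟨hv, u, hu1, hu⟩
    obtain ⟨j, rfl⟩ := extremePoints_convexHull_subset hv
    refine ⟨j, ?_, rfl⟩
    rw [hconv.mem_extremePoints_iff_mem_sdiff_convexHull_sdiff] at hv
    have hnot : ω j ∉ convexHull ℝ (Set.range ω \ {ω j}) := fun h =>
      hv.2 (convexHull_mono (Set.sdiff_subset_sdiff_left (subset_convexHull ℝ _)) h)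
    have hfin : (Set.range ω \ {ω j}).Finite := (Set.finite_range ω).subset Set.sdiff_subset
    obtain ⟨g, a, hg1, hg2⟩ := geometric_hahn_banach_closed_point (convex_convexHull ℝ _)
      (hfin.isClosed_convexHull ℝ) hnot
    set v0 : E2 := (InnerProductSpace.toDual ℝ E2).symm g with hv0
    have hg : ∀ w : E2, (inner ℝ w v0 : ℝ) = g w := by
      intro w
      rw [real_inner_comm, hv0, InnerProductSpace.toDual_symm_apply]
    -- perturb
    obtain ⟨ε, hε, hε1⟩ : ∃ ε : ℝ, 0 < ε ∧ 0 < σ * (u 1 + ε * v0 1) := by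
      have : Filter.Tendsto (fun ε : ℝ => σ * (u 1 + ε * v0 1)) (nhdsWithin 0 (Set.Ioi 0))
          (nhds (σ * (u 1 + 0 * v0 1))) := by
        apply Filter.Tendsto.mono_left _ nhdsWithin_le_nhds
        exact (by fun_prop : Continuous fun ε : ℝ => σ * (u 1 + ε * v0 1)).tendsto 0
      have h2 := this.eventually (lt_mem_nhds (a := 0) (by simpa using hu1))
      obtain ⟨ε, h3, h4⟩ := (h2.and self_mem_nhdsWithin).exists
      exact ⟨ε, h4, h3⟩
    refine ⟨u + ε • v0, by simpa using hε1, fun k hk => ?_⟩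
    have hk' : ω k ∈ Set.range ω \ {ω j} := ⟨⟨k, rfl⟩, fun h => hk (hω h)⟩
    have h1 := hu (ω k) (subset_convexHull ℝ _ ⟨k, rfl⟩)
    have h2 := (hg1 _ (subset_convexHull ℝ _ hk')).trans hg2
    rw [inner_add_right, inner_add_right, inner_smul_right, inner_smul_right, hg, hg]
    nlinarith
  · rintro ⟨j, ⟨u, hu1, hu⟩, rfl⟩
    have hC : convexHull ℝ (Set.range ω) ⊆ {w | (inner ℝ w u : ℝ) < inner ℝ (ω j) u} ∪ {ω j} := by
      apply convexHull_min
      · rintro _ ⟨k, rfl⟩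
        by_cases hk : k = j
        · right; simp [hk]
        · left; exact hu k hk
      · intro x hx y hy a b ha hb hab
        have hle : ∀ z : E2, z ∈ ({w | (inner ℝ w u : ℝ) < inner ℝ (ω j) u} ∪ {ω j} : Set E2) →
            (inner ℝ z u : ℝ) ≤ inner ℝ (ω j) u := by
          rintro z (hz | hz)
          · exact le_of_lt hz
          · rw [Set.mem_singleton_iff.1 hz]
        rcases ha.eq_or_lt with rfl | ha
        · have : b = 1 := by linarith
          simpa [this] using hy
        rcases hb.eq_or_lt with rfl | hb
        · have : a = 1 := by linarith
          simpa [this] using hx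
        by_cases hxy : x = ω j ∧ y = ω j
        · right
          rw [hxy.1, hxy.2, ← add_smul, hab, one_smul]; rfl
        · left
          show (inner ℝ (a • x + b • y) u : ℝ) < inner ℝ (ω j) u
          rw [inner_add_left, inner_smul_left, inner_smul_left]
          simp only [conj_trivial]
          have h1 := hle x hx
          have h2 := hle y hy
          have h3 : (inner ℝ x u : ℝ) < inner ℝ (ω j) u ∨ (inner ℝ y u : ℝ) < inner ℝ (ω j) u := by
            rcases hx with hx | hx
            · exact Or.inl hx
            · rcases hy with hy | hy
              · exact Or.inr hy
              · exact absurd ⟨hx, hy⟩ hxy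
          have hb' : b = 1 - a := by linarith
          subst hb'
          rcases h3 with h3 | h3 <;> nlinarith
    have hmem : ω j ∈ convexHull ℝ (Set.range ω) := subset_convexHull ℝ _ ⟨j, rfl⟩
    refine ⟨?_, u, hu1, ?_⟩
    · rw [hconv.mem_extremePoints_iff_mem_sdiff_convexHull_sdiff]
      refine ⟨hmem, fun h => ?_⟩
      have : convexHull ℝ (convexHull ℝ (Set.range ω) \ {ω j}) ⊆
          {w | (inner ℝ w u : ℝ) < inner ℝ (ω j) u} := by
        apply convexHull_min
        · rintro w ⟨hw, hw'⟩
          exact (hC hw).resolve_right hw'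
        · have : {w : E2 | (inner ℝ w u : ℝ) < inner ℝ (ω j) u} =
            {w : E2 | (innerₛₗ ℝ u) w < inner ℝ (ω j) u} := by
            ext w; simp [real_inner_comm]
          rw [this]
          exact convex_halfSpace_lt (LinearMap.isLinear _) _
      exact lt_irrefl (inner ℝ (ω j) u : ℝ) (this h)
    · intro w hw
      rcases hC hw with h | h
      · exact le_of_lt h
      · rw [Set.mem_singleton_iff.1 h]

lemma upCount_eq {n : ℕ} (ω : Fin n → E2) (hω : Function.Injective ω) : upCount ω = cnt 1 ω := by
  rw [cnt_eq_ncard, ← Set.ncard_image_of_injective _ hω, ← vertex_set 1 ω hω]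
  simp only [one_mul]
  rfl

lemma lowCount_eq {n : ℕ} (ω : Fin n → E2) (hω : Function.Injective ω) : lowCount ω = cnt (-1) ω := by
  rw [cnt_eq_ncard, ← Set.ncard_image_of_injective _ hω, ← vertex_set (-1) ω hω]
  have : ∀ u : E2, 0 < -1 * u 1 ↔ u 1 < 0 := by intro u; constructor <;> intro h <;> linarith
  simp only [this]
  rfl

def lost (σ : ℝ) {m : ℕ} (i : Fin (m + 1)) (x : E2) (S : Fin m → E2) (j : Fin m) : Prop :=
  ind σ S j ∧ ¬ ind σ (i.insertNth x S : Fin (m + 1) → E2) (i.succAbove j)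

lemma ind_mono (σ : ℝ) {m : ℕ} (i : Fin (m + 1)) (x : E2) (S : Fin m → E2) (j : Fin m)
    (h : ind σ (i.insertNth x S : Fin (m + 1) → E2) (i.succAbove j)) : ind σ S j := by
  obtain ⟨u, hu, h⟩ := h
  refine ⟨u, hu, fun k hk => ?_⟩
  have := h (i.succAbove k) (fun h' => hk (Fin.succAbove_right_injective h'))
  simpa using this

lemma capped_of (σ : ℝ) (x y : E2) {N : ℕ} (V : Fin N → E2) (u : E2) (hu : 0 < σ * u 1) (s : ℝ)
    (h1 : s ≤ inner ℝ x u) (h2 : s ≤ inner ℝ y u) (h : ∀ l, inner ℝ (V l) u ≤ s) :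
    capped σ x y V := by
  have hu0 : u ≠ 0 := by rintro rfl; simp at hu
  have hn : 0 < ‖u‖⁻¹ := inv_pos.2 (norm_pos_iff.2 hu0)
  refine ⟨‖u‖⁻¹ • u, ‖u‖⁻¹ * s, ?_, ?_, ?_, ?_, fun l => ?_⟩
  · simp only [PiLp.smul_apply, smul_eq_mul]
    nlinarith
  · exact norm_smul_inv_norm (𝕜 := ℝ) hu0
  · rw [inner_smul_right]; gcongr
  · rw [inner_smul_right]; gcongr
  · rw [inner_smul_right]; have := h l; gcongr

lemma capped_comp {σ : ℝ} {x y : E2} {N N' : ℕ} {V : Fin N → E2} (g : Fin N' → Fin N)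
    (h : capped σ x y V) : capped σ x y (fun l => V (g l)) := by
  obtain ⟨u, s, h1, h2, h3, h4, h5⟩ := h
  exact ⟨u, s, h1, h2, h3, h4, fun l => h5 (g l)⟩

lemma ind_capped {σ : ℝ} {m : ℕ} {i : Fin (m + 1)} {x : E2} {S : Fin m → E2}
    (h : ind σ (i.insertNth x S : Fin (m + 1) → E2) i) : capped σ x x S := by
  obtain ⟨u, hu, h⟩ := h
  refine capped_of σ x x S u hu (inner ℝ x u) le_rfl le_rfl fun l => ?_
  have := h (i.succAbove l) (Fin.succAbove_ne i l)
  simp at this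
  exact this.le

lemma lost_capped {σ : ℝ} {m : ℕ} {i : Fin (m + 1)} {x : E2} {S : Fin m → E2} {j : Fin m}
    (h : lost σ i x S j) : capped σ x (S j) S := by
  obtain ⟨⟨u, hu, h⟩, hn⟩ := h
  refine capped_of σ x (S j) S u hu (inner ℝ (S j) u) ?_ le_rfl fun l => ?_
  · by_contra! hlt
    apply hn
    refine ⟨u, hu, fun k hk => ?_⟩
    rcases Fin.eq_self_or_eq_succAbove i k with rfl | ⟨l, rfl⟩
    · simpa using hlt
    · have : l ≠ j := fun h => hk (by rw [h])
      simpa using h l this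
  · by_cases hl : l = j
    · rw [hl]
    · exact (h l hl).le

lemma insertNth_meas {m : ℕ} (i : Fin (m + 1)) :
    Measurable (fun z : E2 × (Fin m → E2) => (i.insertNth z.1 z.2 : Fin (m + 1) → E2)) := by
  exact (MeasurableEquiv.piFinSuccAbove (fun _ => E2) i).symm.measurable

lemma lost_meas (σ : ℝ) {m : ℕ} (i : Fin (m + 1)) (x : E2) (j : Fin m) :
    MeasurableSet {S : Fin m → E2 | lost σ i x S j} := by
  have h2 : MeasurableSet {S : Fin m → E2 | ind σ (i.insertNth x S : Fin (m + 1) → E2) (i.succAbove j)} :=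
    ((insertNth_meas i).comp measurable_prodMk_left) (ind_meas σ (i.succAbove j))
  exact (ind_meas σ j).inter h2.compl

lemma cnt_diff (σ : ℝ) {m : ℕ} (i : Fin (m + 1)) (x : E2) (S : Fin m → E2) :
    |cnt σ (i.insertNth x S : Fin (m + 1) → E2) - cnt σ S| ≤
      ({S : Fin m → E2 | ind σ (i.insertNth x S : Fin (m + 1) → E2) i}).indicator (fun _ => (1:ℝ)) S +
      ∑ j, ({S : Fin m → E2 | lost σ i x S j}).indicator (fun _ => (1:ℝ)) S := by
  classical
  unfold cnt
  rw [Fin.sum_univ_succAbove _ i, add_sub_assoc, ← Finset.sum_sub_distrib]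
  refine (abs_add_le _ _).trans (add_le_add ?_ ((Finset.abs_sum_le_sum_abs _ _).trans
    (Finset.sum_le_sum fun j _ => ?_)))
  · simp only [Set.indicator, Set.mem_ofPred_eq]
    split_ifs <;> simp
  · simp only [Set.indicator, Set.mem_ofPred_eq]
    have hmono := ind_mono σ i x S j
    by_cases h1 : ind σ (i.insertNth x S : Fin (m + 1) → E2) (i.succAbove j)
    · simp [h1, hmono h1, lost]
    · by_cases h2 : ind σ S j <;> simp [h1, h2, lost]

lemma pi_split {α : Type*} [MeasurableSpace α] (μ : Measure α) [SigmaFinite μ] {m : ℕ}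
    (j : Fin (m + 1)) (F : (Fin (m + 1) → α) → ENNReal) (hF : Measurable F) :
    ∫⁻ W, F W ∂(Measure.pi fun _ => μ) =
      ∫⁻ y, ∫⁻ S, F (j.insertNth y S) ∂(Measure.pi fun _ : Fin m => μ) ∂μ := by
  have h := (measurePreserving_piFinSuccAbove (fun _ : Fin (m + 1) => μ) j).symm
  rw [← h.lintegral_comp hF, lintegral_prod]
  · rfl
  · exact (hF.comp h.measurable).aemeasurable

lemma pi_split_set {β : ℝ} {m : ℕ}
    (j : Fin (m + 1)) (A : Set (Fin (m + 1) → E2)) (hA : MeasurableSet A) :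
    betaPi β (m + 1) A =
      ∫⁻ y, betaPi β m {S | (j.insertNth y S : Fin (m + 1) → E2) ∈ A} ∂(betaMeasure β) := by
  have h := pi_split (betaMeasure β) j (A.indicator 1) (measurable_one.indicator hA)
  rw [lintegral_indicator_one hA] at h
  unfold betaPi
  rw [h]
  refine lintegral_congr fun y => ?_
  rw [← lintegral_indicator_one]
  · rfl
  · exact ((insertNth_meas j).comp measurable_prodMk_left) hA

lemma root_scale {d : ℕ} (hd : 4 ≤ d) {a : ℝ} (ha : 0 < a) : ∃ l : ℝ, 0 < l ∧ l ^ (d - 1) = a ∧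
    ∀ s : ℝ, 0 ≤ s → √s ^ (d - 1) ≤ a → s ≤ l ^ 2 := by
  have hd' : (d - 1) ≠ 0 := by omega
  refine ⟨a ^ ((d - 1 : ℕ) : ℝ)⁻¹, Real.rpow_pos_of_pos ha _, Real.rpow_inv_natCast_pow ha.le hd', ?_⟩
  intro s hs h
  rw [← Real.rpow_inv_natCast_pow ha.le hd'] at h
  have h2 := (pow_le_pow_iff_left₀ (Real.sqrt_nonneg s) (Real.rpow_nonneg ha.le _) hd').1 h
  calc s = √s ^ 2 := (Real.sq_sqrt hs).symm
    _ ≤ _ := by gcongr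

lemma psB_meas (d : ℕ) (x : E2) : Measurable (psB d x) := by
  unfold psB scB; fun_prop
lemma psA_meas (d : ℕ) (σ : ℝ) : Measurable (psA d σ) := by
  unfold psA scA; fun_prop
lemma psA_nonneg (d : ℕ) (σ : ℝ) (x : E2) : 0 ≤ psA d σ x := by unfold psA; positivity
lemma psB_nonneg (d : ℕ) (x y : E2) : 0 ≤ psB d x y := by unfold psB; positivity

lemma layerB {d : ℕ} (hd : 4 ≤ d) {β : ℝ} (hβ : β = (d : ℝ) / 2 - 2) (c : ℝ) (hc : 0 < c) :
    ∃ C : ℝ, 0 ≤ C ∧ ∀ x : E2, ∀ N : ℝ, 0 < N →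
      ∫⁻ y, ENNReal.ofReal (Real.exp (-(c * N * psB d x y))) ∂(betaMeasure β) ≤
        ENNReal.ofReal (C / N) := by
  obtain ⟨K, hK, h⟩ := ub_one hd hβ
  obtain ⟨C, hC, hC2⟩ := layer (α := E2) K c 1 hK.le hc zero_le_one le_rfl
  refine ⟨C, hC, fun x N hN => ?_⟩
  have := hC2 (betaMeasure β) (psB d x) (psB_meas d x) (psB_nonneg d x) ?_ N hN
  · rwa [Real.rpow_neg_one, ← div_eq_mul_inv] at this
  · intro a ha
    obtain ⟨l, hl, hla, hs⟩ := root_scale hd ha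
    rw [Real.rpow_one, ← hla]
    refine (measure_mono ?_).trans (h l hl.le x)
    intro y hy
    have hB : 0 ≤ scB x y := le_max_of_le_right (by positivity)
    have h1 := hs _ hB (le_of_le_of_eq hy hla)
    have h2 : 1 - ‖y‖ ≤ l ^ 2 := (le_max_left _ _).trans h1
    have h3 : ‖x - y‖ ^ 2 / 8 ≤ l ^ 2 := (le_max_right _ _).trans h1
    refine ⟨by linarith, ?_⟩
    apply abs_le_of_sq_le_sq' _ (by positivity) |>.2
    nlinarith

lemma cap3 {d : ℕ} (hd : 4 ≤ d) {β : ℝ} (hβ : β = (d : ℝ) / 2 - 2) :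
    ∃ c : ℝ, 0 < c ∧ ∀ (N : ℕ) (σ : ℝ), |σ| = 1 → ∀ x y z : E2, ‖x‖ ≤ 1 → ‖y‖ ≤ 1 → ‖z‖ ≤ 1 →
      betaPi β N {V | capped σ x y V ∧ capped σ x z V} ≤
        4 * ENNReal.ofReal (Real.exp (-(c * N * (psA d σ x + psB d x y + psB d x z)))) := by
  obtain ⟨c, hc, h⟩ := cap_prob hd hβ
  refine ⟨c / 3, by positivity, fun N σ hσ x y z hx hy hz => ?_⟩
  set p := psA d σ x with hp
  set q := psB d x y with hq
  set r := psB d x z with hr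
  have key : ∀ t : ℝ, p + q + r ≤ 3 * t → betaPi β N {V | capped σ x y V ∧ capped σ x z V} ≤
      4 * ENNReal.ofReal (Real.exp (-(c * N * t))) → betaPi β N {V | capped σ x y V ∧ capped σ x z V} ≤
        4 * ENNReal.ofReal (Real.exp (-(c / 3 * N * (p + q + r)))) := by
    intro t ht h1
    refine h1.trans (mul_le_mul_right (ENNReal.ofReal_le_ofReal (Real.exp_le_exp.2 ?_)) _)
    have : (c / 3 * N) * (p + q + r) ≤ (c / 3 * N) * (3 * t) := by gcongr
    linarith
  have m1 : betaPi β N {V | capped σ x y V ∧ capped σ x z V} ≤ betaPi β N {V | capped σ x y V} :=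
    measure_mono fun V hV => hV.1
  have m2 : betaPi β N {V | capped σ x y V ∧ capped σ x z V} ≤ betaPi β N {V | capped σ x z V} :=
    measure_mono fun V hV => hV.2
  have hA := scA_mem hσ hx
  have hB := scB_mem hx hy
  have hC := scB_mem hx hz
  by_cases h1 : p + q + r ≤ 3 * p
  · exact key p h1 (m1.trans (h N σ hσ x y hx hy _ hA.1 hA.2 (Or.inl le_rfl)))
  by_cases h2 : p + q + r ≤ 3 * q
  · exact key q h2 (m1.trans (h N σ hσ x y hx hy _ hB.1 hB.2 (Or.inr le_rfl)))
  · exact key r (by linarith) (m2.trans (h N σ hσ x z hx hz _ hC.1 hC.2 (Or.inr le_rfl)))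

lemma ind_prob {d : ℕ} {β c : ℝ} (hc : 0 < c)
    (H : ∀ (N : ℕ) (σ : ℝ), |σ| = 1 → ∀ x y z : E2, ‖x‖ ≤ 1 → ‖y‖ ≤ 1 → ‖z‖ ≤ 1 →
      betaPi β N {V | capped σ x y V ∧ capped σ x z V} ≤
        4 * ENNReal.ofReal (Real.exp (-(c * N * (psA d σ x + psB d x y + psB d x z)))))
    (N : ℕ) {σ : ℝ} (hσ : |σ| = 1) {x : E2} (hx : ‖x‖ ≤ 1) (i : Fin (N + 1)) :
    betaPi β N {S | ind σ (i.insertNth x S : Fin (N + 1) → E2) i} ≤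
      4 * ENNReal.ofReal (Real.exp (-(c * N * psA d σ x))) := by
  refine (measure_mono fun S hS => ?_).trans ((H N σ hσ x x x hx hx hx).trans ?_)
  · exact ⟨ind_capped hS, ind_capped hS⟩
  · gcongr
    have := psB_nonneg d x x
    have h2 : 0 ≤ c * N := by positivity
    nlinarith [mul_nonneg h2 this]

lemma lost_prob {d : ℕ} {β c C : ℝ} (hc : 0 < c)
    (H : ∀ (N : ℕ) (σ : ℝ), |σ| = 1 → ∀ x y z : E2, ‖x‖ ≤ 1 → ‖y‖ ≤ 1 → ‖z‖ ≤ 1 →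
      betaPi β N {V | capped σ x y V ∧ capped σ x z V} ≤
        4 * ENNReal.ofReal (Real.exp (-(c * N * (psA d σ x + psB d x y + psB d x z)))))
    (HC : ∀ x : E2, ∀ N : ℝ, 0 < N →
      ∫⁻ y, ENNReal.ofReal (Real.exp (-(c * N * psB d x y))) ∂(betaMeasure β) ≤
        ENNReal.ofReal (C / N))
    (N : ℕ) (hN : 0 < N) {σ : ℝ} (hσ : |σ| = 1) {x : E2} (hx : ‖x‖ ≤ 1) (i : Fin (N + 2))
    (j : Fin (N + 1)) :
    betaPi β (N + 1) {S | lost σ i x S j} ≤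
      4 * ENNReal.ofReal (Real.exp (-(c * N * psA d σ x))) * ENNReal.ofReal (C / N) := by
  rw [pi_split_set j _ (lost_meas σ i x j)]
  have hN' : (0:ℝ) < N := by exact_mod_cast hN
  calc _ ≤ ∫⁻ y, 4 * ENNReal.ofReal (Real.exp (-(c * N * psA d σ x))) *
        ENNReal.ofReal (Real.exp (-(c * N * psB d x y))) ∂(betaMeasure β) := by
        apply lintegral_mono_ae
        filter_upwards [beta_disk β] with y hy
        refine (measure_mono fun S hS => ?_).trans ((H N σ hσ x y y hx hy hy).trans ?_)
        · have := capped_comp j.succAbove (lost_capped hS)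
          simp only [Fin.insertNth_apply_same, Fin.insertNth_apply_succAbove] at this
          exact ⟨this, this⟩
        · rw [mul_assoc (4 : ENNReal), ← ENNReal.ofReal_mul (Real.exp_nonneg _), ← Real.exp_add]
          gcongr
          have := psB_nonneg d x y
          have h2 : 0 ≤ c * N := by positivity
          nlinarith [mul_nonneg h2 this]
    _ ≤ _ := by
        rw [lintegral_const_mul]
        · gcongr
          exact HC x N hN'
        · have := psB_meas d x; fun_prop

lemma lost2_prob {d : ℕ} {β c C : ℝ} (hc : 0 < c)
    (H : ∀ (N : ℕ) (σ : ℝ), |σ| = 1 → ∀ x y z : E2, ‖x‖ ≤ 1 → ‖y‖ ≤ 1 → ‖z‖ ≤ 1 →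
      betaPi β N {V | capped σ x y V ∧ capped σ x z V} ≤
        4 * ENNReal.ofReal (Real.exp (-(c * N * (psA d σ x + psB d x y + psB d x z)))))
    (HC : ∀ x : E2, ∀ N : ℝ, 0 < N →
      ∫⁻ y, ENNReal.ofReal (Real.exp (-(c * N * psB d x y))) ∂(betaMeasure β) ≤
        ENNReal.ofReal (C / N))
    (N : ℕ) (hN : 0 < N) {σ : ℝ} (hσ : |σ| = 1) {x : E2} (hx : ‖x‖ ≤ 1) (i : Fin (N + 3))
    (j k : Fin (N + 2)) (hjk : k ≠ j) :
    betaPi β (N + 2) ({S | lost σ i x S j} ∩ {S | lost σ i x S k}) ≤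
      4 * ENNReal.ofReal (Real.exp (-(c * N * psA d σ x))) * ENNReal.ofReal (C / N) *
        ENNReal.ofReal (C / N) := by
  obtain ⟨k', rfl⟩ := Fin.exists_succAbove_eq hjk
  have hmeas := (lost_meas σ i x j).inter (lost_meas σ i x (j.succAbove k'))
  rw [pi_split_set j _ hmeas]
  have hN' : (0:ℝ) < N := by exact_mod_cast hN
  have hm := psB_meas d x
  calc _ ≤ ∫⁻ y, ∫⁻ z, 4 * ENNReal.ofReal (Real.exp (-(c * N * psA d σ x))) *
        ENNReal.ofReal (Real.exp (-(c * N * psB d x y))) *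
        ENNReal.ofReal (Real.exp (-(c * N * psB d x z))) ∂(betaMeasure β) ∂(betaMeasure β) := by
        apply lintegral_mono_ae
        filter_upwards [beta_disk β] with y hy
        rw [pi_split_set k']
        · apply lintegral_mono_ae
          filter_upwards [beta_disk β] with z hz
          refine (measure_mono fun S hS => ?_).trans ((H N σ hσ x y z hx hy hz).trans ?_)
          · obtain ⟨h1, h2⟩ := hS
            have h1 := capped_comp k'.succAbove (capped_comp j.succAbove (lost_capped h1))
            have h2 := capped_comp k'.succAbove (capped_comp j.succAbove (lost_capped h2))
            simp only [Fin.insertNth_apply_same, Fin.insertNth_apply_succAbove] at h1 h2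
            exact ⟨h1, h2⟩
          · rw [mul_assoc (4 : ENNReal), mul_assoc (4 : ENNReal), ← ENNReal.ofReal_mul (Real.exp_nonneg _), ← Real.exp_add,
              ← ENNReal.ofReal_mul (Real.exp_nonneg _), ← Real.exp_add]
            gcongr
            linarith
        · exact ((insertNth_meas j).comp measurable_prodMk_left) hmeas
    _ ≤ _ := by
        calc _ = ∫⁻ y, 4 * ENNReal.ofReal (Real.exp (-(c * N * psA d σ x))) *
              ENNReal.ofReal (Real.exp (-(c * N * psB d x y))) *
              (∫⁻ z, ENNReal.ofReal (Real.exp (-(c * N * psB d x z))) ∂(betaMeasure β)) ∂(betaMeasure β) := by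
              refine lintegral_congr fun y => ?_
              rw [lintegral_const_mul]; fun_prop
          _ = _ := lintegral_mul_const _ (by fun_prop)
          _ = 4 * ENNReal.ofReal (Real.exp (-(c * N * psA d σ x))) *
              (∫⁻ z, ENNReal.ofReal (Real.exp (-(c * N * psB d x z))) ∂(betaMeasure β)) *
              (∫⁻ z, ENNReal.ofReal (Real.exp (-(c * N * psB d x z))) ∂(betaMeasure β)) := by
              rw [lintegral_const_mul]; fun_prop
          _ ≤ _ := by gcongr <;> exact HC x N hN'

noncomputable def mom (β σ : ℝ) {m : ℕ} (i : Fin (m + 1)) (x : E2) : ENNReal :=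
  ∫⁻ S, ENNReal.ofReal ((cnt σ (i.insertNth x S : Fin (m + 1) → E2) - cnt σ S) ^ 2) ∂(betaPi β m)

lemma mom_pt (σ : ℝ) {m : ℕ} (i : Fin (m + 1)) (x : E2) (S : Fin m → E2) :
    ENNReal.ofReal ((cnt σ (i.insertNth x S : Fin (m + 1) → E2) - cnt σ S) ^ 2) ≤
      2 * ({S : Fin m → E2 | ind σ (i.insertNth x S : Fin (m + 1) → E2) i}).indicator 1 S +
      2 * ∑ j, ∑ k, ({S : Fin m → E2 | lost σ i x S j} ∩ {S | lost σ i x S k}).indicator 1 S := by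
  classical
  have h := cnt_diff σ i x S
  set D := cnt σ (i.insertNth x S : Fin (m + 1) → E2) - cnt σ S
  set a : ℝ := ({S : Fin m → E2 | ind σ (i.insertNth x S : Fin (m + 1) → E2) i}).indicator (fun _ => (1:ℝ)) S with ha
  set b : Fin m → ℝ := fun j => ({S : Fin m → E2 | lost σ i x S j}).indicator (fun _ => (1:ℝ)) S with hb
  have ha2 : a ^ 2 = a := by
    rw [ha]; simp only [Set.indicator]; split_ifs <;> norm_num
  have hb0 : ∀ j, 0 ≤ b j := fun j => Set.indicator_nonneg (fun _ _ => zero_le_one) _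
  have ha0 : 0 ≤ a := Set.indicator_nonneg (fun _ _ => zero_le_one) _
  have h1 : D ^ 2 ≤ 2 * a + 2 * ∑ j, ∑ k, b j * b k := by
    rw [← Finset.sum_mul_sum, ← ha2]
    have : D ^ 2 ≤ (a + ∑ j, b j) ^ 2 := by rw [← sq_abs]; gcongr
    nlinarith [sq_nonneg (a - ∑ j, b j)]
  refine (ENNReal.ofReal_le_ofReal h1).trans (le_of_eq ?_)
  rw [ENNReal.ofReal_add (by positivity) (by
      have : 0 ≤ ∑ j, ∑ k, b j * b k := Finset.sum_nonneg fun j _ => Finset.sum_nonneg fun k _ =>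
        mul_nonneg (hb0 j) (hb0 k)
      positivity),
    ENNReal.ofReal_mul (by norm_num), ENNReal.ofReal_mul (by norm_num),
    ENNReal.ofReal_sum_of_nonneg fun j _ => Finset.sum_nonneg fun k _ => mul_nonneg (hb0 j) (hb0 k)]
  have h2 : ENNReal.ofReal 2 = 2 := by simp
  rw [h2]
  congr 2
  · rw [ha]; simp only [Set.indicator]; split_ifs <;> simp
  · refine Finset.sum_congr rfl fun j _ => ?_
    rw [ENNReal.ofReal_sum_of_nonneg fun k _ => mul_nonneg (hb0 j) (hb0 k)]
    refine Finset.sum_congr rfl fun k _ => ?_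
    simp only [hb, Set.indicator, Set.mem_inter_iff, Set.mem_ofPred_eq]
    by_cases h1 : lost σ i x S j <;> by_cases h2 : lost σ i x S k <;> simp [h1, h2]

lemma mom_bound {d : ℕ} (hd : 4 ≤ d) {β : ℝ} (hβ : β = (d : ℝ) / 2 - 2) :
    ∃ C : ℝ, 0 ≤ C ∧ ∃ c : ℝ, 0 < c ∧ ∀ N : ℕ, 0 < N → ∀ σ : ℝ, |σ| = 1 → ∀ x : E2, ‖x‖ ≤ 1 →
      ∀ i : Fin (N + 3), mom β σ (m := N + 2) i x ≤
        ENNReal.ofReal (C * Real.exp (-(c * N * psA d σ x))) := by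
  classical
  obtain ⟨c, hc, H⟩ := cap3 hd hβ
  obtain ⟨C, hC, HC⟩ := layerB hd hβ c hc
  refine ⟨8 * (1 + 3 * C + 9 * C ^ 2), by positivity, c, hc, fun N hN σ hσ x hx i => ?_⟩
  have hN' : (1:ℝ) ≤ N := by exact_mod_cast hN
  have hA := psA_nonneg d σ x
  set e := Real.exp (-(c * N * psA d σ x)) with he
  have he0 : 0 < e := Real.exp_pos _
  have hmono : ∀ M : ℕ, N ≤ M → Real.exp (-(c * M * psA d σ x)) ≤ e := by
    intro M hM
    rw [he]
    have : (N:ℝ) ≤ M := by exact_mod_cast hM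
    gcongr
  have four : (4 : ENNReal) = ENNReal.ofReal 4 := by simp
  have B1 : betaPi β (N + 2) {S | ind σ (i.insertNth x S : Fin (N + 2 + 1) → E2) i} ≤
      ENNReal.ofReal (4 * e) := by
    refine (ind_prob hc H (N + 2) hσ hx i).trans ?_
    rw [four, ← ENNReal.ofReal_mul (by norm_num)]
    apply ENNReal.ofReal_le_ofReal
    have := hmono (N + 2) (by omega)
    linarith
  have B2 : ∀ j : Fin (N + 2), betaPi β (N + 2) {S | lost σ i x S j} ≤ ENNReal.ofReal (4 * e * (C / N)) := by
    intro j
    refine (lost_prob hc H HC (N + 1) (by omega) hσ hx i j).trans ?_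
    rw [four, ← ENNReal.ofReal_mul (by norm_num), ← ENNReal.ofReal_mul (by positivity)]
    apply ENNReal.ofReal_le_ofReal
    have := hmono (N + 1) (by omega)
    gcongr
    simp
  have B3 : ∀ j k : Fin (N + 2), k ≠ j →
      betaPi β (N + 2) ({S | lost σ i x S j} ∩ {S | lost σ i x S k}) ≤
        ENNReal.ofReal (4 * e * (C / N) * (C / N)) := by
    intro j k hjk
    refine (lost2_prob hc H HC N hN hσ hx i j k hjk).trans ?_
    rw [four, ← ENNReal.ofReal_mul (by norm_num), ← ENNReal.ofReal_mul (by positivity),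
      ← ENNReal.ofReal_mul (by positivity)]
  have hmA : MeasurableSet {S : Fin (N + 2) → E2 | ind σ (i.insertNth x S : Fin (N + 2 + 1) → E2) i} :=
    ((insertNth_meas i).comp measurable_prodMk_left) (ind_meas σ i)
  have hmL : ∀ j k, MeasurableSet ({S : Fin (N + 2) → E2 | lost σ i x S j} ∩ {S | lost σ i x S k}) :=
    fun j k => (lost_meas σ i x j).inter (lost_meas σ i x k)
  unfold mom
  calc _ ≤ ∫⁻ S, (2 * ({S : Fin (N + 2) → E2 | ind σ (i.insertNth x S : Fin (N + 2 + 1) → E2) i}).indicator 1 S +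
      2 * ∑ j, ∑ k, ({S : Fin (N + 2) → E2 | lost σ i x S j} ∩ {S | lost σ i x S k}).indicator 1 S) ∂(betaPi β (N + 2)) :=
        lintegral_mono fun S => mom_pt σ i x S
    _ = 2 * betaPi β (N + 2) {S | ind σ (i.insertNth x S : Fin (N + 2 + 1) → E2) i} +
        2 * ∑ j, ∑ k, betaPi β (N + 2) ({S : Fin (N + 2) → E2 | lost σ i x S j} ∩ {S | lost σ i x S k}) := by
        have hmi : ∀ j k, Measurable (({S : Fin (N + 2) → E2 | lost σ i x S j} ∩ {S | lost σ i x S k}).indicator (1 : (Fin (N + 2) → E2) → ENNReal)) :=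
          fun j k => measurable_one.indicator (hmL j k)
        have hms : ∀ j, Measurable (fun S => ∑ k, ({S : Fin (N + 2) → E2 | lost σ i x S j} ∩ {S | lost σ i x S k}).indicator (1 : (Fin (N + 2) → E2) → ENNReal) S) :=
          fun j => Finset.measurable_sum _ fun k _ => hmi j k
        rw [lintegral_add_left ((measurable_one.indicator hmA).const_mul 2),
          lintegral_const_mul _ (measurable_one.indicator hmA),
          lintegral_const_mul _ (Finset.measurable_sum _ fun j _ => hms j),
          lintegral_finsetSum _ fun j _ => hms j, lintegral_indicator_one hmA]
        congr 2
        refine Finset.sum_congr rfl fun j _ => ?_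
        rw [lintegral_finsetSum _ fun k _ => hmi j k]
        refine Finset.sum_congr rfl fun k _ => ?_
        rw [lintegral_indicator_one (hmL j k)]
    _ ≤ ENNReal.ofReal 2 * ENNReal.ofReal (4 * e) + ENNReal.ofReal 2 * ∑ j : Fin (N + 2), ∑ k : Fin (N + 2),
        ENNReal.ofReal ((if k = j then 4 * e * (C / N) else 0) + 4 * e * (C / N) * (C / N)) := by
        rw [show ENNReal.ofReal 2 = 2 by simp]
        gcongr with j _ k _
        by_cases hk : k = j
        · subst hk
          rw [Set.inter_self, if_pos rfl]
          refine (B2 k).trans (ENNReal.ofReal_le_ofReal ?_)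
          have : 0 ≤ 4 * e * (C / N) * (C / N) := by positivity
          linarith
        · rw [if_neg hk, zero_add]; exact B3 j k hk
    _ = ENNReal.ofReal (2 * (4 * e) + 2 * ∑ j : Fin (N + 2), ∑ k : Fin (N + 2),
        ((if k = j then 4 * e * (C / N) else 0) + 4 * e * (C / N) * (C / N))) := by
        have hp : ∀ j k : Fin (N + 2), 0 ≤ ((if k = j then 4 * e * (C / N) else 0) + 4 * e * (C / N) * (C / N)) := by
          intro j k; split_ifs <;> positivity
        have hp2 : ∀ j : Fin (N + 2), 0 ≤ ∑ k : Fin (N + 2), ((if k = j then 4 * e * (C / N) else 0) + 4 * e * (C / N) * (C / N)) :=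
          fun j => Finset.sum_nonneg fun k _ => hp j k
        have hp3 := Finset.sum_nonneg (s := Finset.univ) fun j _ => hp2 j
        rw [ENNReal.ofReal_add (by positivity) (mul_nonneg zero_le_two hp3),
          ENNReal.ofReal_mul (p := 2) zero_le_two, ENNReal.ofReal_mul (p := 2) zero_le_two,
          ENNReal.ofReal_sum_of_nonneg fun j _ => hp2 j]
        congr 2
        refine Finset.sum_congr rfl fun j _ => ?_
        rw [ENNReal.ofReal_sum_of_nonneg fun k _ => hp j k]
    _ ≤ _ := by
        apply ENNReal.ofReal_le_ofReal
        simp only [Finset.sum_add_distrib, Finset.sum_ite_eq', Finset.mem_univ, if_true, Finset.sum_const,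
          Finset.card_univ, Fintype.card_fin, nsmul_eq_mul]
        push_cast
        have h3 : ((N:ℝ) + 2) * (C / N) ≤ 3 * C := by
          rw [mul_div_assoc', div_le_iff₀ (by positivity)]
          nlinarith
        have h30 : 0 ≤ ((N:ℝ) + 2) * (C / N) := by positivity
        have h4 : (((N:ℝ) + 2) * (C / N)) ^ 2 ≤ (3 * C) ^ 2 := by gcongr
        nlinarith [mul_le_mul_of_nonneg_left h3 he0.le, mul_le_mul_of_nonneg_left h4 he0.le]

section cov
variable {α : Type*} [MeasurableSpace α]

def zz {n : ℕ} (b : Fin n → Bool) (W : Fin n → α × α) : Fin n → α :=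
  fun k => bif b k then (W k).2 else (W k).1

lemma zz_mp (μ : Measure α) [IsProbabilityMeasure μ] {n : ℕ} (b : Fin n → Bool) :
    MeasurePreserving (zz b) (Measure.pi fun _ : Fin n => μ.prod μ) (Measure.pi fun _ : Fin n => μ) := by
  have := measurePreserving_pi (fun _ : Fin n => μ.prod μ) (fun _ : Fin n => μ)
    (f := fun k w => bif b k then w.2 else w.1) (fun k => by
      cases b k
      · exact measurePreserving_fst
      · exact measurePreserving_snd)
  exact this

lemma zz_insert {m : ℕ} (b : Fin (m + 1) → Bool) (i : Fin (m + 1)) (w : α × α) (V : Fin m → α × α) :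
    zz b (i.insertNth w V) =
      (i.insertNth (bif b i then w.2 else w.1) (zz (fun l => b (i.succAbove l)) V) : Fin (m + 1) → α) := by
  funext k
  rcases Fin.eq_self_or_eq_succAbove i k with rfl | ⟨l, rfl⟩
  · simp [zz]
  · simp [zz]

lemma cs {Ω : Type*} [MeasurableSpace Ω] (P : Measure Ω) (a b : Ω → ENNReal) (ha : Measurable a)
    (hb : Measurable b) (A B : ENNReal) (hA : ∫⁻ x, a x ^ 2 ∂P ≤ A ^ 2) (hB : ∫⁻ x, b x ^ 2 ∂P ≤ B ^ 2) :
    ∫⁻ x, a x * b x ∂P ≤ A * B := by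
  have h := ENNReal.lintegral_mul_le_Lp_mul_Lq P (p := 2) (q := 2) (by
    constructor <;> norm_num) ha.aemeasurable hb.aemeasurable
  refine h.trans ?_
  have e : ∀ X : ENNReal, (X ^ 2) ^ (1 / (2:ℝ)) = X := by
    intro X
    rw [← ENNReal.rpow_natCast, ← ENNReal.rpow_mul]; norm_num
  simp only [ENNReal.rpow_two]
  gcongr
  · calc _ ≤ (A ^ 2) ^ (1 / (2:ℝ)) := by gcongr
      _ = A := e A
  · calc _ ≤ (B ^ 2) ^ (1 / (2:ℝ)) := by gcongr
      _ = B := e B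

lemma insertNth_meas' {m : ℕ} (i : Fin (m + 1)) :
    Measurable (fun z : α × (Fin m → α) => (i.insertNth z.1 z.2 : Fin (m + 1) → α)) :=
  (MeasurableEquiv.piFinSuccAbove (fun _ => α) i).symm.measurable

lemma cov_step (μ : Measure α) [IsProbabilityMeasure μ] {m : ℕ}
    (f g : (Fin (m + 1) → α) → ℝ) (f0 g0 : (Fin m → α) → ℝ)
    (hf : Measurable f) (hg : Measurable g) (hf0 : Measurable f0) (hg0 : Measurable g0)
    (B : ℝ) (hfB : ∀ ω, |f ω| ≤ B) (hgB : ∀ ω, |g ω| ≤ B) (F G : α → ENNReal)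
    (hF : Measurable F) (hG : Measurable G) (i : Fin (m + 1))
    (HF : ∀ᵐ x ∂μ, ∫⁻ S, ‖f (i.insertNth x S) - f0 S‖ₑ ^ 2 ∂(Measure.pi fun _ : Fin m => μ) ≤ F x ^ 2)
    (HG : ∀ᵐ x ∂μ, ∫⁻ S, ‖g (i.insertNth x S) - g0 S‖ₑ ^ 2 ∂(Measure.pi fun _ : Fin m => μ) ≤ G x ^ 2)
    (a b b' : Fin (m + 1) → Bool) (ha : a i = false) (hb : b i = false) (hb' : b' i = true)
    (hbb : ∀ l, b (i.succAbove l) = b' (i.succAbove l)) :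
    ‖∫ W, f (zz a W) * (g (zz b W) - g (zz b' W)) ∂(Measure.pi fun _ : Fin (m + 1) => μ.prod μ)‖ₑ ≤
      2 * ∫⁻ x, F x * G x ∂μ + 2 * ((∫⁻ x, F x ∂μ) * ∫⁻ x, G x ∂μ) := by
  classical
  set P := Measure.pi fun _ : Fin (m + 1) => μ.prod μ with hP
  set s : (Fin (m + 1) → α × α) → (Fin (m + 1) → α × α) :=
    fun W k => (if k = i then Prod.swap else id) (W k) with hs
  have hsmp : MeasurePreserving s P P := by
    refine measurePreserving_pi (fun _ : Fin (m + 1) => μ.prod μ) (fun _ : Fin (m + 1) => μ.prod μ)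
      (f := fun k => (if k = i then Prod.swap else id)) (fun k => ?_)
    by_cases hk : k = i
    · simp only [hk, if_true]; exact Measure.measurePreserving_swap
    · simp only [hk, if_false]; exact MeasurePreserving.id _
  have hsb : ∀ W, zz b (s W) = zz b' W := by
    intro W; funext k
    rcases Fin.eq_self_or_eq_succAbove i k with rfl | ⟨l, rfl⟩
    · simp [zz, hs, hb, hb']
    · simp [zz, hs, hbb, Fin.succAbove_ne]
  have hsb' : ∀ W, zz b' (s W) = zz b W := by
    intro W; funext k
    rcases Fin.eq_self_or_eq_succAbove i k with rfl | ⟨l, rfl⟩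
    · simp [zz, hs, hb, hb']
    · simp [zz, hs, hbb, Fin.succAbove_ne]
  have hfa : Measurable fun W => f (zz a W) := hf.comp (zz_mp μ a).measurable
  have hgb : Measurable fun W => g (zz b W) := hg.comp (zz_mp μ b).measurable
  have hgb' : Measurable fun W => g (zz b' W) := hg.comp (zz_mp μ b').measurable
  have hB0 : 0 ≤ B := by
    obtain ⟨W0⟩ : Nonempty (Fin (m + 1) → α) := by
      have := μ.nonempty_of_neZero
      infer_instance
    exact (abs_nonneg _).trans (hfB W0)
  have int1 : Integrable (fun W => f (zz a W) * (g (zz b W) - g (zz b' W))) P := by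
    refine Integrable.of_bound (hfa.mul (hgb.sub hgb')).aestronglyMeasurable (B * (B + B)) (ae_of_all _ fun W => ?_)
    rw [norm_mul, Real.norm_eq_abs, Real.norm_eq_abs]
    gcongr
    · exact hfB _
    · exact (abs_sub _ _).trans (add_le_add (hgB _) (hgB _))
  have int2 : Integrable (fun W => f (zz a (s W)) * (g (zz b W) - g (zz b' W))) P := by
    refine Integrable.of_bound ((hfa.comp hsmp.measurable).mul (hgb.sub hgb')).aestronglyMeasurable (B * (B + B)) (ae_of_all _ fun W => ?_)
    rw [norm_mul, Real.norm_eq_abs, Real.norm_eq_abs]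
    gcongr
    · exact hfB _
    · exact (abs_sub _ _).trans (add_le_add (hgB _) (hgB _))
  have sym : ∫ W, f (zz a W) * (g (zz b W) - g (zz b' W)) ∂P =
      - ∫ W, f (zz a (s W)) * (g (zz b W) - g (zz b' W)) ∂P := by
    have hmap := hsmp.map_eq
    calc _ = ∫ W, f (zz a W) * (g (zz b W) - g (zz b' W)) ∂(P.map s) := by rw [hmap]
      _ = ∫ W, f (zz a (s W)) * (g (zz b (s W)) - g (zz b' (s W))) ∂P := by
        rw [integral_map hsmp.measurable.aemeasurable]
        rw [hmap]; exact int1.aestronglyMeasurable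
      _ = _ := by
        rw [← integral_neg]
        congr 1; funext W; rw [hsb, hsb']; ring
  have half : ∫ W, f (zz a W) * (g (zz b W) - g (zz b' W)) ∂P =
      (1 / 2) * ∫ W, (f (zz a W) - f (zz a (s W))) * (g (zz b W) - g (zz b' W)) ∂P := by
    have : ∫ W, (f (zz a W) - f (zz a (s W))) * (g (zz b W) - g (zz b' W)) ∂P =
      (∫ W, f (zz a W) * (g (zz b W) - g (zz b' W)) ∂P) -
       ∫ W, f (zz a (s W)) * (g (zz b W) - g (zz b' W)) ∂P := by
      rw [← integral_sub int1 int2]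
      congr 1; funext W; ring
    rw [this]; linarith
  have le1 : ‖∫ W, f (zz a W) * (g (zz b W) - g (zz b' W)) ∂P‖ₑ ≤
      ∫⁻ W, ‖(f (zz a W) - f (zz a (s W)))‖ₑ * ‖(g (zz b W) - g (zz b' W))‖ₑ ∂P := by
    rw [half, enorm_mul]
    calc _ ≤ 1 * ‖∫ W, (f (zz a W) - f (zz a (s W))) * (g (zz b W) - g (zz b' W)) ∂P‖ₑ := by
          gcongr
          rw [Real.enorm_eq_ofReal (by norm_num)]
          simp
      _ ≤ _ := by
          rw [one_mul]
          refine (enorm_integral_le_lintegral_enorm _).trans (le_of_eq ?_)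
          congr 1; funext W; rw [enorm_mul]
  refine le1.trans ?_
  rw [hP, pi_split (μ.prod μ) i _ (by
    have := (hfa.comp hsmp.measurable)
    exact ((hfa.sub (hfa.comp hsmp.measurable)).enorm).mul ((hgb.sub hgb').enorm))]
  have hsi : ∀ w V, s (i.insertNth w V) = (i.insertNth w.swap V : Fin (m + 1) → α × α) := by
    intro w V; funext k
    rcases Fin.eq_self_or_eq_succAbove i k with rfl | ⟨l, rfl⟩
    · simp [hs]
    · simp [hs, Fin.succAbove_ne]
  set A : (Fin m → α × α) → (Fin m → α) := zz (fun l => a (i.succAbove l)) with hA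
  set D : (Fin m → α × α) → (Fin m → α) := zz (fun l => b' (i.succAbove l)) with hD
  have hAmp := zz_mp μ (fun l => a (i.succAbove l))
  have hDmp := zz_mp μ (fun l => b' (i.succAbove l))
  set p : α → (Fin m → α × α) → ENNReal := fun x V => ‖f (i.insertNth x (A V)) - f0 (A V)‖ₑ with hp
  set q : α → (Fin m → α × α) → ENNReal := fun x V => ‖g (i.insertNth x (D V)) - g0 (D V)‖ₑ with hq
  have hins : ∀ x, Measurable fun S : Fin m → α => (i.insertNth x S : Fin (m + 1) → α) := fun x =>
    (insertNth_meas' i).comp measurable_prodMk_left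
  have hp0 : ∀ x, Measurable fun S : Fin m → α => ‖f (i.insertNth x S) - f0 S‖ₑ := fun x =>
    ((hf.comp (hins x)).sub hf0).enorm
  have hq0 : ∀ x, Measurable fun S : Fin m → α => ‖g (i.insertNth x S) - g0 S‖ₑ := fun x =>
    ((hg.comp (hins x)).sub hg0).enorm
  have hpm : ∀ x, Measurable (p x) := fun x => (hp0 x).comp hAmp.measurable
  have hqm : ∀ x, Measurable (q x) := fun x => (hq0 x).comp hDmp.measurable
  have HF' : ∀ᵐ x ∂μ, ∫⁻ V, p x V ^ 2 ∂(Measure.pi fun _ : Fin m => μ.prod μ) ≤ F x ^ 2 := by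
    filter_upwards [HF] with x hx
    rw [← hAmp.lintegral_comp ((hp0 x).pow_const 2)] at hx
    exact hx
  have HG' : ∀ᵐ x ∂μ, ∫⁻ V, q x V ^ 2 ∂(Measure.pi fun _ : Fin m => μ.prod μ) ≤ G x ^ 2 := by
    filter_upwards [HG] with x hx
    rw [← hDmp.lintegral_comp ((hq0 x).pow_const 2)] at hx
    exact hx
  have fin : ∀ᵐ w ∂(μ.prod μ), ∫⁻ V, ‖(f (zz a (i.insertNth w V)) - f (zz a (s (i.insertNth w V))))‖ₑ *
      ‖(g (zz b (i.insertNth w V)) - g (zz b' (i.insertNth w V)))‖ₑ ∂(Measure.pi fun _ : Fin m => μ.prod μ) ≤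
      F w.1 * G w.1 + F w.1 * G w.2 + F w.2 * G w.1 + F w.2 * G w.2 := by
    filter_upwards [Measure.quasiMeasurePreserving_fst.ae HF', Measure.quasiMeasurePreserving_snd.ae HF',
      Measure.quasiMeasurePreserving_fst.ae HG', Measure.quasiMeasurePreserving_snd.ae HG'] with w h1 h2 h3 h4
    calc _ ≤ ∫⁻ V, (p w.1 V * q w.1 V + p w.1 V * q w.2 V + p w.2 V * q w.1 V + p w.2 V * q w.2 V)
          ∂(Measure.pi fun _ : Fin m => μ.prod μ) := by
          refine lintegral_mono fun V => ?_
          have e1 : ‖(f (zz a (i.insertNth w V)) - f (zz a (s (i.insertNth w V))))‖ₑ ≤ p w.1 V + p w.2 V := by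
            rw [hsi, zz_insert, zz_insert, ha]
            simp only [cond_false, Prod.fst_swap]
            calc _ = ‖(f (i.insertNth w.1 (A V)) - f0 (A V)) - (f (i.insertNth w.2 (A V)) - f0 (A V))‖ₑ := by
                  congr 1; rw [hA]; ring
              _ ≤ _ := enorm_sub_le
          have e2 : ‖(g (zz b (i.insertNth w V)) - g (zz b' (i.insertNth w V)))‖ₑ ≤ q w.1 V + q w.2 V := by
            rw [zz_insert, zz_insert, hb, hb']
            simp only [cond_false, cond_true, hbb]
            calc _ = ‖(g (i.insertNth w.1 (D V)) - g0 (D V)) - (g (i.insertNth w.2 (D V)) - g0 (D V))‖ₑ := by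
                  congr 1; rw [hD]; ring
              _ ≤ _ := enorm_sub_le
          calc _ ≤ (p w.1 V + p w.2 V) * (q w.1 V + q w.2 V) := mul_le_mul' e1 e2
            _ = _ := by ring
      _ = _ := by
          have hpq : ∀ x y, Measurable fun V => p x V * q y V := fun x y => (hpm x).mul (hqm y)
          rw [lintegral_add_right _ (hpq _ _), lintegral_add_right _ (hpq _ _),
            lintegral_add_right _ (hpq _ _)]
      _ ≤ _ := by
          gcongr <;> exact cs _ _ _ (hpm _) (hqm _) _ _ (by assumption) (by assumption)
  refine (lintegral_mono_ae fin).trans (le_of_eq ?_)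
  have m1 : Measurable fun w : α × α => F w.1 := hF.comp measurable_fst
  have m2 : Measurable fun w : α × α => F w.2 := hF.comp measurable_snd
  have m3 : Measurable fun w : α × α => G w.1 := hG.comp measurable_fst
  have m4 : Measurable fun w : α × α => G w.2 := hG.comp measurable_snd
  have m24 : Measurable fun w : α × α => F w.2 * G w.2 := m2.mul m4
  have m23 : Measurable fun w : α × α => F w.2 * G w.1 := m2.mul m3
  have m14 : Measurable fun w : α × α => F w.1 * G w.2 := m1.mul m4
  rw [lintegral_add_right _ m24, lintegral_add_right _ m23, lintegral_add_right _ m14]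
  have i1 : ∫⁻ w, F w.1 * G w.1 ∂(μ.prod μ) = ∫⁻ x, F x * G x ∂μ :=
    (measurePreserving_fst (μ := μ) (ν := μ)).lintegral_comp (hF.mul hG)
  have i4 : ∫⁻ w, F w.2 * G w.2 ∂(μ.prod μ) = ∫⁻ x, F x * G x ∂μ :=
    (measurePreserving_snd (μ := μ) (ν := μ)).lintegral_comp (hF.mul hG)
  have i2 : ∫⁻ w, F w.1 * G w.2 ∂(μ.prod μ) = (∫⁻ x, F x ∂μ) * ∫⁻ x, G x ∂μ :=
    lintegral_prod_mul hF.aemeasurable hG.aemeasurable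
  have i3 : ∫⁻ w, F w.2 * G w.1 ∂(μ.prod μ) = (∫⁻ x, F x ∂μ) * ∫⁻ x, G x ∂μ := by
    simp only [mul_comm (F _)]
    rw [lintegral_prod_mul hG.aemeasurable hF.aemeasurable, mul_comm]
  rw [i1, i2, i3, i4]
  ring

lemma cov_bound (μ : Measure α) [IsProbabilityMeasure μ] {m : ℕ}
    (f g : (Fin (m + 1) → α) → ℝ) (f0 g0 : (Fin m → α) → ℝ)
    (hf : Measurable f) (hg : Measurable g) (hf0 : Measurable f0) (hg0 : Measurable g0)
    (B : ℝ) (hfB : ∀ ω, |f ω| ≤ B) (hgB : ∀ ω, |g ω| ≤ B) (F G : α → ENNReal)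
    (hF : Measurable F) (hG : Measurable G)
    (HF : ∀ i : Fin (m + 1), ∀ᵐ x ∂μ, ∫⁻ S, ‖f (i.insertNth x S) - f0 S‖ₑ ^ 2 ∂(Measure.pi fun _ : Fin m => μ) ≤ F x ^ 2)
    (HG : ∀ i : Fin (m + 1), ∀ᵐ x ∂μ, ∫⁻ S, ‖g (i.insertNth x S) - g0 S‖ₑ ^ 2 ∂(Measure.pi fun _ : Fin m => μ) ≤ G x ^ 2) :
    ‖(∫ ω, f ω * g ω ∂(Measure.pi fun _ : Fin (m + 1) => μ)) -
      (∫ ω, f ω ∂(Measure.pi fun _ : Fin (m + 1) => μ)) * ∫ ω, g ω ∂(Measure.pi fun _ : Fin (m + 1) => μ)‖ₑ ≤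
      (m + 1 : ℕ) * (2 * ∫⁻ x, F x * G x ∂μ + 2 * ((∫⁻ x, F x ∂μ) * ∫⁻ x, G x ∂μ)) := by
  classical
  set P := Measure.pi fun _ : Fin (m + 1) => μ.prod μ with hP
  set T : ℕ → Fin (m + 1) → Bool := fun t k => decide (k.1 < t) with hT
  have hfa : ∀ b, Measurable fun W => f (zz b W) := fun b => hf.comp (zz_mp μ b).measurable
  have hga : ∀ b, Measurable fun W => g (zz b W) := fun b => hg.comp (zz_mp μ b).measurable
  have hint : ∀ t, Integrable (fun W => f (zz (T 0) W) * g (zz (T t) W)) P := by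
    intro t
    refine Integrable.of_bound ((hfa _).mul (hga _)).aestronglyMeasurable (B * B) (ae_of_all _ fun W => ?_)
    rw [norm_mul, Real.norm_eq_abs, Real.norm_eq_abs]
    have := (abs_nonneg _).trans (hfB (zz (T 0) W))
    gcongr
    · exact hfB _
    · exact hgB _
  have h0 : ∫ ω, f ω * g ω ∂(Measure.pi fun _ : Fin (m + 1) => μ) =
      ∫ W, f (zz (T 0) W) * g (zz (T 0) W) ∂P := by
    have hfg : Measurable fun ω => f ω * g ω := hf.mul hg
    rw [← (zz_mp μ (T 0)).map_eq, integral_map (zz_mp μ (T 0)).measurable.aemeasurable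
      hfg.aestronglyMeasurable]
  have h1 : (∫ ω, f ω ∂(Measure.pi fun _ : Fin (m + 1) => μ)) * ∫ ω, g ω ∂(Measure.pi fun _ : Fin (m + 1) => μ) =
      ∫ W, f (zz (T 0) W) * g (zz (T (m + 1)) W) ∂P := by
    rw [← integral_prod_mul, ← (measurePreserving_arrowProdEquivProdArrow α α (Fin (m + 1))
      (fun _ => μ) (fun _ => μ)).map_eq, integral_map_equiv]
    congr 1; funext W
    have e1 : zz (T 0) W = (MeasurableEquiv.arrowProdEquivProdArrow α α (Fin (m + 1)) W).1 := by
      funext k; simp [zz, hT]; rfl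
    have e2 : zz (T (m + 1)) W = (MeasurableEquiv.arrowProdEquivProdArrow α α (Fin (m + 1)) W).2 := by
      funext k
      have : T (m + 1) k = true := by simp only [hT, decide_eq_true_eq]; exact k.2
      simp only [zz, this, cond_true]; rfl
    rw [e1, e2]
  have tele : ∀ N, (∫ W, f (zz (T 0) W) * g (zz (T 0) W) ∂P) - ∫ W, f (zz (T 0) W) * g (zz (T N) W) ∂P =
      ∑ t ∈ Finset.range N, ∫ W, f (zz (T 0) W) * (g (zz (T t) W) - g (zz (T (t + 1)) W)) ∂P := by
    intro N
    induction N with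
    | zero => simp
    | succ N ih =>
      rw [Finset.sum_range_succ, ← ih]
      simp only [mul_sub]
      rw [integral_sub (hint N) (hint (N + 1))]
      ring
  rw [h0, h1, tele]
  refine (enorm_sum_le _ _).trans ?_
  refine (Finset.sum_le_card_nsmul _ _ _ fun t ht => ?_).trans (le_of_eq (by rw [Finset.card_range, nsmul_eq_mul]))
  have ht' := Finset.mem_range.1 ht
  refine cov_step μ f g f0 g0 hf hg hf0 hg0 B hfB hgB F G hF hG ⟨t, ht'⟩ (HF _) (HG _) (T 0) (T t) (T (t + 1))
    (by simp [hT]) (by simp [hT]) (by simp [hT]) (fun l => ?_)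
  have hne : ((Fin.succAbove ⟨t, ht'⟩ l : Fin (m + 1)) : ℕ) ≠ t := fun h =>
    Fin.succAbove_ne ⟨t, ht'⟩ l (Fin.ext h)
  simp only [hT]
  congr 1
  apply propext
  omega

end cov

lemma betaPi_prob {β : ℝ} (h : 0 ≤ β) (n : ℕ) : IsProbabilityMeasure (betaPi β n) := by
  have := beta_prob h
  unfold betaPi; infer_instance

lemma inj_ae {β : ℝ} (h : 0 ≤ β) (m : ℕ) : ∀ᵐ ω ∂(betaPi β (m + 1)), Function.Injective ω := by
  have := beta_prob h
  have hna := beta_noAtoms β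
  have key : ∀ i j : Fin (m + 1), i ≠ j → ∀ᵐ ω ∂(betaPi β (m + 1)), ω i ≠ ω j := by
    intro i j hij
    obtain ⟨l, rfl⟩ := Fin.exists_succAbove_eq hij.symm
    rw [ae_iff]
    have hset : {ω : Fin (m + 1) → E2 | ¬ (ω i ≠ ω (i.succAbove l))} = {ω | ω i = ω (i.succAbove l)} := by
      ext ω; simp
    have hm : MeasurableSet {ω : Fin (m + 1) → E2 | ω i = ω (i.succAbove l)} :=
      measurableSet_eq_fun (measurable_pi_apply _) (measurable_pi_apply _)
    rw [hset, pi_split_set i _ hm]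
    refine (lintegral_congr fun y => ?_).trans lintegral_zero
    have e : {S : Fin m → E2 | (i.insertNth y S : Fin (m + 1) → E2) ∈ {ω : Fin (m + 1) → E2 | ω i = ω (i.succAbove l)}} =
        (fun S : Fin m → E2 => S l) ⁻¹' {y} := by
      ext S; simp [eq_comm]
    rw [e]
    have := (measurePreserving_eval (fun _ : Fin m => betaMeasure β) l).measure_preimage
      (measurableSet_singleton y).nullMeasurableSet
    unfold betaPi
    exact this.trans (measure_singleton y)
  have h2 : ∀ᵐ ω ∂(betaPi β (m + 1)), ∀ i j : Fin (m + 1), i ≠ j → ω i ≠ ω j := by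
    rw [ae_all_iff]; intro i
    rw [ae_all_iff]; intro j
    by_cases hij : i = j
    · simp [hij]
    · filter_upwards [key i j hij] with ω hω _ using hω
  filter_upwards [h2] with ω hω i j hij
  by_contra hne
  exact hω i j hne hij

lemma scA_nonneg' (σ : ℝ) (x : E2) : 0 ≤ scA σ x := le_max_of_le_right (by positivity)

lemma layer_both {d : ℕ} (hd : 4 ≤ d) {β : ℝ} (hβ : β = (d : ℝ) / 2 - 2) (c : ℝ) (hc : 0 < c) :
    ∃ C : ℝ, 0 ≤ C ∧ ∀ N : ℝ, 0 < N →
      ∫⁻ x, ENNReal.ofReal (Real.exp (-(c * N * (psA d 1 x + psA d (-1) x)))) ∂(betaMeasure β) ≤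
        ENNReal.ofReal (C / N) := by
  obtain ⟨K, hK, h⟩ := ub_two hd hβ
  obtain ⟨C, hC, hC2⟩ := layer (α := E2) K c 1 hK.le hc zero_le_one le_rfl
  refine ⟨C, hC, fun N hN => ?_⟩
  have := hC2 (betaMeasure β) (fun x => psA d 1 x + psA d (-1) x) ((psA_meas d 1).add (psA_meas d (-1)))
    (fun x => add_nonneg (psA_nonneg d 1 x) (psA_nonneg d (-1) x)) ?_ N hN
  · rwa [Real.rpow_neg_one, ← div_eq_mul_inv] at this
  · intro a ha
    obtain ⟨l, hl, hla, hs⟩ := root_scale hd ha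
    rw [Real.rpow_one, ← hla]
    refine (measure_mono ?_).trans (h l hl.le)
    intro x hx
    have hx' : psA d 1 x + psA d (-1) x ≤ a := le_of_le_of_eq hx hla
    have n1 := psA_nonneg d 1 x
    have n2 := psA_nonneg d (-1) x
    have h1 := hs _ (scA_nonneg' 1 x) (show psA d 1 x ≤ a by linarith)
    have h2 := hs _ (scA_nonneg' (-1) x) (show psA d (-1) x ≤ a by linarith)
    have h3 : 1 - ‖x‖ ≤ l ^ 2 := (le_max_left _ _).trans h1
    have h4 : (max 0 (-(1 * x 1))) ^ 2 / 2 ≤ l ^ 2 := (le_max_right _ _).trans h1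
    have h5 : (max 0 (-(-1 * x 1))) ^ 2 / 2 ≤ l ^ 2 := (le_max_right _ _).trans h2
    refine ⟨by linarith, ?_⟩
    apply abs_le_of_sq_le_sq _ (by positivity)
    rcases le_total 0 (x 1) with h0 | h0
    · rw [max_eq_right (by linarith)] at h5
      nlinarith
    · rw [max_eq_right (by linarith)] at h4
      nlinarith

lemma layer_one {d : ℕ} (hd : 4 ≤ d) {β : ℝ} (hβ : β = (d : ℝ) / 2 - 2) (c : ℝ) (hc : 0 < c) :
    ∃ C : ℝ, 0 ≤ C ∧ ∀ σ : ℝ, ∀ N : ℝ, 0 < N →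
      ∫⁻ x, ENNReal.ofReal (Real.exp (-(c * N * psA d σ x))) ∂(betaMeasure β) ≤
        ENNReal.ofReal (C / √N) := by
  have := beta_prob (beta_nonneg hd hβ)
  obtain ⟨K, hK, h⟩ := ub_zero hd hβ
  obtain ⟨C, hC, hC2⟩ := layer (α := E2) (K + 1) c (1 / 2) (by positivity) hc (by norm_num) (by norm_num)
  refine ⟨C, hC, fun σ N hN => ?_⟩
  have := hC2 (betaMeasure β) (psA d σ) (psA_meas d σ) (psA_nonneg d σ) ?_ N hN
  · rwa [Real.rpow_neg hN.le, ← Real.sqrt_eq_rpow, ← div_eq_mul_inv] at this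
  · intro a ha
    obtain ⟨l, hl, hla, hs⟩ := root_scale hd ha
    rw [← Real.sqrt_eq_rpow]
    rcases le_or_gt l 1 with hl1 | hl1
    · have h1 : l ^ (d - 2) ≤ √a := by
        apply Real.le_sqrt_of_sq_le
        rw [← hla, ← pow_mul]
        exact pow_le_pow_of_le_one hl.le hl1 (by omega)
      calc _ ≤ _ := measure_mono (t := {y | 1 - l ^ 2 ≤ ‖y‖}) ?_
        _ ≤ _ := h l hl.le
        _ ≤ _ := by
          apply ENNReal.ofReal_le_ofReal
          have : 0 ≤ √a := Real.sqrt_nonneg a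
          nlinarith
      intro x hx
      have h1 := hs _ (scA_nonneg' σ x) hx
      have h3 : 1 - ‖x‖ ≤ l ^ 2 := (le_max_left _ _).trans h1
      show 1 - l ^ 2 ≤ ‖x‖
      linarith
    · refine prob_le_one.trans ?_
      rw [← ENNReal.ofReal_one]
      apply ENNReal.ofReal_le_ofReal
      have : 1 ≤ √a := by
        rw [Real.one_le_sqrt, ← hla]
        exact one_le_pow₀ hl1.le
      nlinarith

lemma ofReal_combine (p a b : ℝ) (hp : 0 ≤ p) (ha : 0 ≤ a) (hb : 0 ≤ b) :
    ENNReal.ofReal p * (2 * ENNReal.ofReal a + 2 * (ENNReal.ofReal b * ENNReal.ofReal b)) =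
      ENNReal.ofReal (p * (2 * a + 2 * (b * b))) := by
  rw [ENNReal.ofReal_mul hp, ENNReal.ofReal_add (by positivity) (by positivity),
    ENNReal.ofReal_mul zero_le_two, ENNReal.ofReal_mul zero_le_two, ENNReal.ofReal_mul hb]
  simp

lemma cov_cnt {d : ℕ} (hd : 4 ≤ d) {β : ℝ} (hβ : β = (d : ℝ) / 2 - 2) :
    ∃ C : ℝ, 0 ≤ C ∧ ∀ N : ℕ, 0 < N →
      |(∫ ω : Fin (N + 3) → E2, cnt 1 ω * cnt (-1) ω ∂(betaPi β (N + 3))) -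
        (∫ ω, cnt 1 ω ∂(betaPi β (N + 3))) * ∫ ω, cnt (-1) ω ∂(betaPi β (N + 3))| ≤ C := by
  have hpr := beta_prob (beta_nonneg hd hβ)
  obtain ⟨C, hC, c, hc, HM⟩ := mom_bound hd hβ
  obtain ⟨C1, hC1, H1⟩ := layer_both hd hβ (c / 2) (by positivity)
  obtain ⟨C2, hC2, H2⟩ := layer_one hd hβ (c / 2) (by positivity)
  refine ⟨4 * (2 * (C * C1) + 2 * (C * C2 ^ 2)), by positivity, fun N hN => ?_⟩
  have hN' : (1:ℝ) ≤ N := by exact_mod_cast hN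
  set F : ℝ → E2 → ENNReal := fun σ x => ENNReal.ofReal (√C * Real.exp (-(c / 2 * N * psA d σ x))) with hF
  have hFm : ∀ σ, Measurable (F σ) := by
    intro σ
    have := psA_meas d σ
    simp only [hF]; fun_prop
  have hH : ∀ σ : ℝ, |σ| = 1 → ∀ i : Fin (N + 2 + 1), ∀ᵐ x ∂(betaMeasure β),
      ∫⁻ S, ‖cnt σ (i.insertNth x S : Fin (N + 2 + 1) → E2) - cnt σ S‖ₑ ^ 2
        ∂(Measure.pi fun _ : Fin (N + 2) => betaMeasure β) ≤ F σ x ^ 2 := by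
    intro σ hσ i
    filter_upwards [beta_disk β] with x hx
    have := HM N hN σ hσ x hx i
    calc _ = mom β σ (m := N + 2) i x := by
          unfold mom betaPi
          refine lintegral_congr fun S => ?_
          rw [← ofReal_norm, ← ENNReal.ofReal_pow (norm_nonneg _), Real.norm_eq_abs, sq_abs]
      _ ≤ _ := this
      _ = _ := by
          simp only [hF]
          rw [← ENNReal.ofReal_pow (by positivity), mul_pow, Real.sq_sqrt hC, ← Real.exp_nat_mul]
          congr 3
          push_cast; ring
  have hbd : ∀ σ, ∀ ω : Fin (N + 2 + 1) → E2, |cnt σ ω| ≤ (N + 2 + 1 : ℕ) := fun σ ω => by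
    rw [abs_of_nonneg (cnt_nonneg σ ω)]; exact cnt_le σ ω
  have main := cov_bound (betaMeasure β) (m := N + 2) (cnt 1) (cnt (-1)) (cnt 1) (cnt (-1))
    (cnt_meas _ _) (cnt_meas _ _) (cnt_meas _ _) (cnt_meas _ _) (N + 2 + 1 : ℕ) (hbd 1) (hbd (-1))
    (F 1) (F (-1)) (hFm _) (hFm _) (hH 1 (by simp)) (hH (-1) (by simp))
  have I1 : ∫⁻ x, F 1 x * F (-1) x ∂(betaMeasure β) ≤ ENNReal.ofReal (C * (C1 / N)) := by
    calc _ = ∫⁻ x, ENNReal.ofReal C * ENNReal.ofReal (Real.exp (-(c / 2 * N * (psA d 1 x + psA d (-1) x)))) ∂(betaMeasure β) := by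
          refine lintegral_congr fun x => ?_
          simp only [hF]
          rw [← ENNReal.ofReal_mul (by positivity), ← ENNReal.ofReal_mul hC]
          congr 1
          rw [mul_mul_mul_comm, Real.mul_self_sqrt hC, ← Real.exp_add]
          congr 2; ring
      _ = ENNReal.ofReal C * ∫⁻ x, ENNReal.ofReal (Real.exp (-(c / 2 * N * (psA d 1 x + psA d (-1) x)))) ∂(betaMeasure β) := by
          rw [lintegral_const_mul]
          have h1 := psA_meas d 1
          have h2 := psA_meas d (-1)
          fun_prop
      _ ≤ ENNReal.ofReal C * ENNReal.ofReal (C1 / N) := by gcongr; exact H1 N (by positivity)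
      _ = _ := by rw [ENNReal.ofReal_mul hC]
  have I2 : ∀ σ, ∫⁻ x, F σ x ∂(betaMeasure β) ≤ ENNReal.ofReal (√C * (C2 / √N)) := by
    intro σ
    calc _ = ENNReal.ofReal (√C) * ∫⁻ x, ENNReal.ofReal (Real.exp (-(c / 2 * N * psA d σ x))) ∂(betaMeasure β) := by
          rw [← lintegral_const_mul]
          · refine lintegral_congr fun x => ?_
            simp only [hF]
            rw [ENNReal.ofReal_mul (by positivity)]
          · have h1 := psA_meas d σ
            fun_prop
      _ ≤ ENNReal.ofReal (√C) * ENNReal.ofReal (C2 / √N) := by gcongr; exact H2 σ N (by positivity)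
      _ = _ := by rw [ENNReal.ofReal_mul (by positivity)]
  have hfin := main.trans (mul_le_mul' (le_refl _) (add_le_add (mul_le_mul' (le_refl _) I1)
    (mul_le_mul' (le_refl _) (mul_le_mul' (I2 1) (I2 (-1))))))
  have hnn : ((N + 2 + 1 : ℕ) : ENNReal) = ENNReal.ofReal ((N:ℝ) + 3) := by
    rw [← ENNReal.ofReal_natCast]; congr 1; push_cast; ring
  rw [hnn, ofReal_combine _ _ _ (by positivity) (by positivity) (by positivity), ← ofReal_norm, Real.norm_eq_abs,
    ENNReal.ofReal_le_ofReal_iff (by positivity)] at hfin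
  refine hfin.trans ?_
  have e : √C * (C2 / √N) * (√C * (C2 / √N)) = C * C2 ^ 2 / N := by
    rw [mul_mul_mul_comm, Real.mul_self_sqrt hC, div_mul_div_comm, Real.mul_self_sqrt (by positivity)]
    ring
  rw [e]
  have e2 : ((N:ℝ) + 3) * (2 * (C * (C1 / N)) + 2 * (C * C2 ^ 2 / N)) =
      (((N:ℝ) + 3) / N) * (2 * (C * C1) + 2 * (C * C2 ^ 2)) := by ring
  rw [e2]
  gcongr
  rw [div_le_iff₀ (by positivity)]
  linarith

theorem covariance_upper_lower_bound (d : ℕ) (hd : 4 ≤ d)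
    (β : ℝ) (hβ : β = (d : ℝ) / 2 - 2) :
    ∃ c : ℝ, 0 < c ∧ ∃ N : ℕ, ∀ n : ℕ, N ≤ n →
      |(∫ ω, upCount ω * lowCount ω ∂ betaPi β n) -
          (∫ ω, upCount ω ∂ betaPi β n) * (∫ ω, lowCount ω ∂ betaPi β n)| ≤
        c * Real.log n ^ 2 := by
  obtain ⟨C, hC, H⟩ := cov_cnt hd hβ
  refine ⟨C + 1, by positivity, 4, fun n hn => ?_⟩
  obtain ⟨N, rfl⟩ : ∃ N, n = N + 3 := ⟨n - 3, by omega⟩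
  have hinj := inj_ae (beta_nonneg hd hβ) (N + 2)
  have e1 : ∫ ω : Fin (N + 3) → E2, upCount ω * lowCount ω ∂ betaPi β (N + 3) =
      ∫ ω : Fin (N + 3) → E2, cnt 1 ω * cnt (-1) ω ∂ betaPi β (N + 3) := by
    apply integral_congr_ae
    filter_upwards [hinj] with ω hω
    rw [upCount_eq ω hω, lowCount_eq ω hω]
  have e2 : ∫ ω : Fin (N + 3) → E2, upCount ω ∂ betaPi β (N + 3) =
      ∫ ω : Fin (N + 3) → E2, cnt 1 ω ∂ betaPi β (N + 3) := by
    apply integral_congr_ae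
    filter_upwards [hinj] with ω hω
    rw [upCount_eq ω hω]
  have e3 : ∫ ω : Fin (N + 3) → E2, lowCount ω ∂ betaPi β (N + 3) =
      ∫ ω : Fin (N + 3) → E2, cnt (-1) ω ∂ betaPi β (N + 3) := by
    apply integral_congr_ae
    filter_upwards [hinj] with ω hω
    rw [lowCount_eq ω hω]
  rw [e1, e2, e3]
  refine (H N (by omega)).trans ?_
  have hlog : 1 ≤ Real.log ((N + 3 : ℕ) : ℝ) := by
    rw [Real.le_log_iff_exp_le (by positivity)]
    have := Real.exp_one_lt_d9
    push_cast
    have : (0:ℝ) ≤ N := by positivity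
    linarith
  have : 1 ≤ Real.log ((N + 3 : ℕ) : ℝ) ^ 2 := one_le_pow₀ hlog
  nlinarith
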